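/- arXiv:0804.3032 — 3 statements merged into one kernel-verified Lean document; each statement's English description precedes it below -/
import Mathlib

section
/- Let β > 0 and let m ≥ 1 be an integer. There exists K > 0 depending only on m and β such that for all integers n ≥ 1, the expected number of degenerate pairs of adjacent half-edges of G^n_{m,β} satisfies 0 ≤ E[Σ_{i=1}^{n} binom(d(u_i), 2) − Σ_{1≤a<b<c≤n} (m(a,b)·m(a,c) + m(a,b)·m(b,c) + m(a,c)·m(b,c))] ≤ K · n^{1/(2+β)}. -/
open Finset

/-- A parent sequence of length `N`: for each `t ∈ {2,…,N}` an index `f t ∈ {1,…,t-1}`. -/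
def ParentSeq (N : ℕ) : Type :=
  ∀ t : Set.Icc 2 N, Set.Icc 1 ((t : ℕ) - 1)

noncomputable instance (N : ℕ) : Fintype (ParentSeq N) := by
  unfold ParentSeq
  classical
  infer_instance

/-- The value of a parent sequence at `j` (junk value `0` outside `{2,…,N}`). -/
def pval {N : ℕ} (f : ParentSeq N) (j : ℕ) : ℕ :=
  if h : 2 ≤ j ∧ j ≤ N then (f ⟨j, Set.mem_Icc.mpr h⟩ : ℕ) else 0

/-- The degree `d_t(v_i)` of vertex `i` at time `t` in the tree determined by `f`. -/
def deg {N : ℕ} (f : ParentSeq N) (t i : ℕ) : ℕ :=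
  ((Finset.Icc 2 t).filter (fun j => pval f j = i)).card + (if 2 ≤ i then 1 else 0)

/-- The Móri probability of the parent sequence `f`. -/
noncomputable def moriP {N : ℕ} (β : ℝ) (f : ParentSeq N) : ℝ :=
  ∏ t ∈ Finset.Icc 2 N, ((deg f (t - 1) (pval f t) : ℝ) + β) / ((2 + β) * ((t : ℝ) - 1) - 2)

/-- Expectation of `X` under the Móri measure on parent sequences of length `N`. -/
noncomputable def moriE (N : ℕ) (β : ℝ) (X : ParentSeq N → ℝ) : ℝ :=
  ∑ f : ParentSeq N, moriP β f * X f

open Classical in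
/-- Probability of an event under the Móri measure on parent sequences of length `N`. -/
noncomputable def moriPr (N : ℕ) (β : ℝ) (p : ParentSeq N → Prop) : ℝ :=
  ∑ f : ParentSeq N, if p f then moriP β f else 0

/-- The index of the merged vertex containing tree vertex `t` when merging in blocks of `m`. -/
def blk (m t : ℕ) : ℕ := (t - 1) / m + 1

/-- The number `m(a,b)` of edges joining `u_a` and `u_b` in the Móri graph `G^n_{m,β}`. -/
def mult (n m : ℕ) (f : ParentSeq (n * m)) (a b : ℕ) : ℕ :=
  ((Finset.Icc 2 (n * m)).filter (fun t =>
    (blk m t = a ∧ blk m (pval f t) = b) ∨ (blk m t = b ∧ blk m (pval f t) = a))).card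

/-- The degree `d(u_i)` of the merged vertex `u_i` in the Móri graph `G^n_{m,β}`
(a loop contributes `2`). -/
def degU (n m : ℕ) (f : ParentSeq (n * m)) (i : ℕ) : ℕ :=
  ((Finset.Icc 2 (n * m)).filter (fun t => blk m t = i)).card +
  ((Finset.Icc 2 (n * m)).filter (fun t => blk m (pval f t) = i)).card


/-! ### Expectation of functionals of the parent function -/

def Valid (N : ℕ) (g : ℕ → ℕ) : Prop := ∀ j, 2 ≤ j → j ≤ N → 1 ≤ g j ∧ g j < j

noncomputable def EX (N : ℕ) (β : ℝ) (X : (ℕ → ℕ) → ℝ) : ℝ :=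
  moriE N β (fun f => X (pval f))

def dg (g : ℕ → ℕ) (t i : ℕ) : ℕ :=
  ((Finset.Icc 2 t).filter (fun j => g j = i)).card + (if 2 ≤ i then 1 else 0)

noncomputable def DD (β : ℝ) (t : ℕ) : ℝ := (2 + β) * (t : ℝ) - 2

noncomputable def pr (β : ℝ) (g : ℕ → ℕ) (t i : ℕ) : ℝ := ((dg g t i : ℝ) + β) / DD β t

lemma DD_pos {β : ℝ} (hβ : 0 < β) {t : ℕ} (ht : 1 ≤ t) : 0 < DD β t := by
  have : (1 : ℝ) ≤ t := by exact_mod_cast ht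
  unfold DD
  nlinarith

lemma pr_nonneg {β : ℝ} (hβ : 0 < β) {t : ℕ} (ht : 1 ≤ t) (g : ℕ → ℕ) (i : ℕ) :
    0 ≤ pr β g t i := by
  have := DD_pos hβ ht
  unfold pr
  positivity

lemma pval_valid {N : ℕ} (f : ParentSeq N) : Valid N (pval f) := by
  intro j h1 h2
  have := (f ⟨j, Set.mem_Icc.mpr ⟨h1, h2⟩⟩).2
  rw [Set.mem_Icc] at this
  simp only [pval, h1, h2, and_self, dif_pos]
  simp only at this
  omega

lemma moriP_eq {N : ℕ} (β : ℝ) (f : ParentSeq N) :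
    moriP β f = ∏ t ∈ Finset.Icc 2 N, pr β (pval f) (t - 1) (pval f t) := by
  unfold moriP
  refine Finset.prod_congr rfl fun t ht => ?_
  rw [Finset.mem_Icc] at ht
  unfold pr DD
  rw [Nat.cast_sub (by omega)]
  simp [deg, dg]

lemma moriP_nonneg {N : ℕ} {β : ℝ} (hβ : 0 < β) (f : ParentSeq N) : 0 ≤ moriP β f := by
  rw [moriP_eq]
  refine Finset.prod_nonneg fun t ht => ?_
  rw [Finset.mem_Icc] at ht
  exact pr_nonneg hβ (by omega) _ _

lemma EX_mono {N : ℕ} {β : ℝ} (hβ : 0 < β) {X Y : (ℕ → ℕ) → ℝ}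
    (h : ∀ g, Valid N g → X g ≤ Y g) : EX N β X ≤ EX N β Y := by
  unfold EX moriE
  exact Finset.sum_le_sum fun f _ =>
    mul_le_mul_of_nonneg_left (h _ (pval_valid f)) (moriP_nonneg hβ f)

lemma EX_congr {N : ℕ} {β : ℝ} {X Y : (ℕ → ℕ) → ℝ}
    (h : ∀ g, Valid N g → X g = Y g) : EX N β X = EX N β Y := by
  unfold EX moriE
  exact Finset.sum_congr rfl fun f _ => by simp only [h _ (pval_valid f)]

lemma EX_add (N : ℕ) (β : ℝ) (X Y : (ℕ → ℕ) → ℝ) :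
    EX N β (fun g => X g + Y g) = EX N β X + EX N β Y := by
  simp only [EX, moriE, mul_add, Finset.sum_add_distrib]

lemma EX_mul (N : ℕ) (β c : ℝ) (X : (ℕ → ℕ) → ℝ) :
    EX N β (fun g => c * X g) = c * EX N β X := by
  simp only [EX, moriE, Finset.mul_sum]
  exact Finset.sum_congr rfl fun f _ => by ring

lemma EX_sum {ι : Type*} (N : ℕ) (β : ℝ) (s : Finset ι) (X : ι → (ℕ → ℕ) → ℝ) :
    EX N β (fun g => ∑ i ∈ s, X i g) = ∑ i ∈ s, EX N β (X i) := by
  simp only [EX, moriE, Finset.mul_sum]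
  exact Finset.sum_comm

lemma pval_ext {N : ℕ} {f f' : ParentSeq N} (h : pval f = pval f') : f = f' := by
  funext t
  obtain ⟨t, ht⟩ := t
  have := congrFun h t
  rw [Set.mem_Icc] at ht
  simp only [pval, ht, and_self, dif_pos] at this
  exact Subtype.ext this

/-- The parent sequence with a given valid parent function. -/
def ofFun {N : ℕ} (g : ℕ → ℕ) (hg : Valid N g) : ParentSeq N :=
  fun t => ⟨g t, by
    have h := t.2
    rw [Set.mem_Icc] at h
    have := hg t h.1 h.2
    rw [Set.mem_Icc]
    omega⟩

lemma pval_ofFun {N : ℕ} (g : ℕ → ℕ) (hg : Valid N g) (j : ℕ) :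
    pval (ofFun g hg) j = if 2 ≤ j ∧ j ≤ N then g j else 0 := by
  unfold pval ofFun
  split_ifs <;> rfl

lemma valid_update {N : ℕ} {g : ℕ → ℕ} (hg : Valid N g) {i : ℕ} (hi : i ∈ Finset.Icc 1 N) :
    Valid (N + 1) (Function.update g (N + 1) i) := by
  rw [Finset.mem_Icc] at hi
  intro j h1 h2
  by_cases h : j = N + 1
  · subst h; simp; omega
  · rw [Function.update_of_ne h]; exact hg j h1 (by omega)

lemma pval_zero {N : ℕ} (f : ParentSeq N) {j : ℕ} (h : N < j) : pval f j = 0 := by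
  unfold pval
  rw [dif_neg (by omega)]

lemma pval_zero' {N : ℕ} (f : ParentSeq N) {j : ℕ} (h : j < 2) : pval f j = 0 := by
  unfold pval
  rw [dif_neg (by omega)]

/-- Extension of a parent sequence by one step. -/
def ext1 {N : ℕ} (f : ParentSeq N) (i : ℕ) (hi : i ∈ Finset.Icc 1 N) : ParentSeq (N + 1) :=
  ofFun _ (valid_update (pval_valid f) hi)

lemma pval_ext1 {N : ℕ} (f : ParentSeq N) (i : ℕ) (hi : i ∈ Finset.Icc 1 N) :
    pval (ext1 f i hi) = Function.update (pval f) (N + 1) i := by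
  funext j
  unfold ext1
  rw [pval_ofFun]
  rw [Finset.mem_Icc] at hi
  split_ifs with h
  · rfl
  · rw [Function.update_of_ne (by omega)]
    by_cases h2 : j < 2
    · rw [pval_zero' _ h2]
    · rw [pval_zero _ (by omega)]

lemma dg_congr {g g' : ℕ → ℕ} {t : ℕ} (h : ∀ j ≤ t, g j = g' j) (i : ℕ) :
    dg g t i = dg g' t i := by
  unfold dg
  congr 2
  refine Finset.filter_congr fun j hj => ?_
  rw [Finset.mem_Icc] at hj
  rw [h j hj.2]

lemma moriP_ext1 {N : ℕ} (hN : 1 ≤ N) (β : ℝ) (f : ParentSeq N) (i : ℕ)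
    (hi : i ∈ Finset.Icc 1 N) :
    moriP β (ext1 f i hi) = moriP β f * pr β (pval f) N i := by
  rw [moriP_eq, moriP_eq, pval_ext1, Finset.prod_Icc_succ_top (by omega)]
  congr 1
  · refine Finset.prod_congr rfl fun t ht => ?_
    rw [Finset.mem_Icc] at ht
    unfold pr
    rw [dg_congr (g' := pval f), Function.update_of_ne (by omega)]
    intro j hj
    rw [Function.update_of_ne (by omega)]
  · unfold pr
    rw [dg_congr (g' := pval f)]
    · simp
    · intro j hj
      simp only [Nat.add_sub_cancel] at hj
      rw [Function.update_of_ne (by omega)]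

lemma EX_succ {N : ℕ} (hN : 1 ≤ N) (β : ℝ) (X : (ℕ → ℕ) → ℝ) :
    EX (N + 1) β X = EX N β (fun g => ∑ i ∈ Finset.Icc 1 N,
      pr β g N i * X (Function.update g (N + 1) i)) := by
  unfold EX moriE
  simp only [Finset.mul_sum]
  simp only [← Finset.sum_attach (Finset.Icc 1 N)]
  rw [← Finset.sum_product' (Finset.univ : Finset (ParentSeq N)) (Finset.Icc 1 N).attach]
  symm
  refine Finset.sum_bij (fun p _ => ext1 p.1 p.2.1 p.2.2) ?_ ?_ ?_ ?_
  · intros; exact Finset.mem_univ _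
  · rintro ⟨f, i, hi⟩ _ ⟨f', i', hi'⟩ _ h
    have h := congrArg pval h
    simp only [pval_ext1] at h
    have h1 : i = i' := by simpa using congrFun h (N + 1)
    subst h1
    have h2 : f = f' := by
      apply pval_ext
      funext j
      by_cases hj : j = N + 1
      · rw [pval_zero _ (by omega), pval_zero _ (by omega)]
      · have := congrFun h j
        rwa [Function.update_of_ne hj, Function.update_of_ne hj] at this
    subst h2
    rfl
  · intro f _
    have hv := pval_valid f
    have hv' : Valid N (pval f) := fun j h1 h2 => hv j h1 (by omega)
    have hi : pval f (N + 1) ∈ Finset.Icc 1 N := by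
      have := hv (N + 1) (by omega) le_rfl
      rw [Finset.mem_Icc]; omega
    refine ⟨⟨ofFun (pval f) hv', ⟨_, hi⟩⟩, by simp, ?_⟩
    apply pval_ext
    rw [pval_ext1]
    funext j
    by_cases hj : j = N + 1
    · subst hj; simp
    · rw [Function.update_of_ne hj, pval_ofFun]
      split_ifs with h
      · rfl
      · by_cases h2 : j < 2
        · rw [pval_zero' _ h2]
        · rw [pval_zero _ (by omega)]
  · rintro ⟨f, i, hi⟩ _
    simp only [moriP_ext1 hN, pval_ext1]
    ring

instance : Unique (ParentSeq 1) where
  default := ofFun (fun _ => 0) (fun j h1 h2 => by omega)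
  uniq f := by
    apply pval_ext
    funext j
    by_cases h2 : j < 2
    · rw [pval_zero' _ h2, pval_zero' _ h2]
    · rw [pval_zero _ (by omega), pval_zero _ (by omega)]

lemma EX_one (β : ℝ) (X : (ℕ → ℕ) → ℝ) : EX 1 β X = X (fun _ => 0) := by
  unfold EX moriE
  rw [Fintype.sum_unique]
  have : pval (default : ParentSeq 1) = fun _ => 0 := by
    funext j
    by_cases h2 : j < 2
    · rw [pval_zero' _ h2]
    · rw [pval_zero _ (by omega)]
  simp only [this, moriP_eq]
  simp

lemma pr_sum {N : ℕ} {β : ℝ} (hβ : 0 < β) (hN : 1 ≤ N) {g : ℕ → ℕ} (hg : Valid N g) :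
    ∑ i ∈ Finset.Icc 1 N, pr β g N i = 1 := by
  have hD := DD_pos hβ hN
  unfold pr
  rw [← Finset.sum_div, div_eq_one_iff_eq hD.ne', Finset.sum_add_distrib, ← Nat.cast_sum]
  unfold dg
  rw [Finset.sum_add_distrib, ← Finset.card_eq_sum_card_fiberwise (s := Finset.Icc 2 N)
    (t := Finset.Icc 1 N) (f := g), ← Finset.card_filter]
  · have : (Finset.Icc 1 N).filter (fun i => 2 ≤ i) = Finset.Icc 2 N := by
      ext i; simp only [Finset.mem_filter, Finset.mem_Icc]; omega
    rw [this]
    simp only [Nat.card_Icc, Finset.sum_const, nsmul_eq_mul, DD]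
    obtain ⟨k, rfl⟩ : ∃ k, N = k + 1 := ⟨N - 1, by omega⟩
    simp only [Nat.add_sub_cancel, show k + 1 + 1 - 2 = k by omega]
    push_cast
    ring
  · intro j hj
    simp only [Finset.coe_Icc, Set.mem_Icc] at hj ⊢
    have := hg j hj.1 hj.2
    omega

lemma EX_tower {s : ℕ} {β : ℝ} (hβ : 0 < β) (hs : 1 ≤ s) {X : (ℕ → ℕ) → ℝ}
    (hX : ∀ g k i, s < k → X (Function.update g k i) = X g) {t : ℕ} (ht : s ≤ t) :
    EX t β X = EX s β X := by
  induction t, ht using Nat.le_induction with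
  | base => rfl
  | succ t ht ih =>
    rw [EX_succ (by omega), ← ih]
    refine EX_congr fun g hg => ?_
    simp only [hX _ (t + 1) _ (by omega)]
    rw [← Finset.sum_mul, pr_sum hβ (by omega) hg, one_mul]

lemma EX_const {N : ℕ} {β : ℝ} (hβ : 0 < β) (hN : 1 ≤ N) (c : ℝ) :
    EX N β (fun _ => c) = c := by
  rw [EX_tower hβ le_rfl (fun _ _ _ _ => rfl) hN, EX_one]

/-! ### Weights of blocks -/

lemma blk_card {m : ℕ} (hm : 1 ≤ m) (t k : ℕ) :
    ((Finset.Icc 1 t).filter (fun i => blk m i = k)).card ≤ m := by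
  have : (Finset.Icc 1 t).filter (fun i => blk m i = k) ⊆ Finset.Ioc ((k - 1) * m) ((k - 1) * m + m) := by
    intro i hi
    rw [Finset.mem_filter, Finset.mem_Icc] at hi
    obtain ⟨⟨h1, h2⟩, h3⟩ := hi
    replace h3 : (i - 1) / m + 1 = k := h3
    have h4 : (i - 1) / m = k - 1 := by rw [← h3, Nat.add_sub_cancel]
    rw [Nat.div_eq_iff (by omega)] at h4
    rw [Finset.mem_Ioc]
    omega
  refine (Finset.card_le_card this).trans ?_
  simp

lemma blk_mono (m : ℕ) {i j : ℕ} (h : i ≤ j) : blk m i ≤ blk m j := by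
  unfold blk
  have := Nat.div_le_div_right (c := m) (show i - 1 ≤ j - 1 by omega)
  omega

def cI (m : ℕ) (g : ℕ → ℕ) (t k : ℕ) : ℕ :=
  ((Finset.Icc 2 t).filter (fun j => blk m (g j) = k)).card

noncomputable def W (m : ℕ) (β : ℝ) (g : ℕ → ℕ) (t k : ℕ) : ℝ := cI m g t k + m * (1 + β)

noncomputable def W0 (m : ℕ) (β : ℝ) : ℝ := m + m * (1 + β)

lemma W_pos {m : ℕ} {β : ℝ} (hm : 1 ≤ m) (hβ : 0 < β) (g : ℕ → ℕ) (t k : ℕ) :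
    0 < W m β g t k := by
  have : (1 : ℝ) ≤ m := by exact_mod_cast hm
  unfold W
  positivity

lemma W0_pos {m : ℕ} {β : ℝ} (hm : 1 ≤ m) (hβ : 0 < β) : 0 < W0 m β := by
  have : (1 : ℝ) ≤ m := by exact_mod_cast hm
  unfold W0
  positivity

lemma W_ge {m : ℕ} {β : ℝ} (hβ : 0 < β) (g : ℕ → ℕ) (t k : ℕ) : (m : ℝ) ≤ W m β g t k := by
  unfold W
  have : (0 : ℝ) ≤ m := by positivity
  have : (0 : ℝ) ≤ cI m g t k := by positivity
  nlinarith

lemma W_congr {m : ℕ} {β : ℝ} {g g' : ℕ → ℕ} {t : ℕ} (h : ∀ j ≤ t, g j = g' j) (k : ℕ) :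
    W m β g t k = W m β g' t k := by
  unfold W cI
  congr 3
  refine Finset.filter_congr fun j hj => ?_
  rw [Finset.mem_Icc] at hj
  rw [h j hj.2]

lemma W_update_lt {m : ℕ} {β : ℝ} (g : ℕ → ℕ) {t s : ℕ} (h : t < s) (i k : ℕ) :
    W m β (Function.update g s i) t k = W m β g t k :=
  W_congr (fun j hj => Function.update_of_ne (by omega) _ _) k

lemma W_succ {m : ℕ} {β : ℝ} (g : ℕ → ℕ) {t : ℕ} (ht : 1 ≤ t) (k : ℕ) :
    W m β g (t + 1) k = W m β g t k + if blk m (g (t + 1)) = k then 1 else 0 := by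
  unfold W cI
  rw [← Finset.insert_Icc_right_eq_Icc_add_one (by omega), Finset.filter_insert]
  split_ifs with h
  · rw [Finset.card_insert_of_notMem (by simp)]
    push_cast; ring
  · ring

lemma W_update {m : ℕ} {β : ℝ} (g : ℕ → ℕ) {t : ℕ} (ht : 1 ≤ t) (i k : ℕ) :
    W m β (Function.update g (t + 1) i) (t + 1) k
      = W m β g t k + if blk m i = k then 1 else 0 := by
  rw [W_succ _ ht, W_update_lt _ (by omega)]
  simp

lemma W_le_W0 {m : ℕ} {β : ℝ} (hm : 1 ≤ m) {g : ℕ → ℕ} {t k : ℕ} (hg : Valid t g)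
    (hk : blk m t ≤ k) : W m β g t k ≤ W0 m β := by
  unfold W W0
  have : cI m g t k ≤ m := by
    refine le_trans (Finset.card_le_card ?_) (blk_card hm t k)
    intro j hj
    simp only [Finset.mem_filter, Finset.mem_Icc] at hj ⊢
    obtain ⟨⟨h1, h2⟩, h3⟩ := hj
    refine ⟨by omega, ?_⟩
    have h4 := blk_mono m (hg j h1 h2).2.le
    have h5 := blk_mono m h2
    omega
  have : (cI m g t k : ℝ) ≤ m := by exact_mod_cast this
  linarith

lemma W_double {m : ℕ} {β : ℝ} (hm : 1 ≤ m) (hβ : 0 < β) (g : ℕ → ℕ) {r t : ℕ} (k : ℕ)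
    (hr : 1 ≤ r) (hrt : r + 1 ≤ t) (hb : blk m (r + 1) = blk m t) :
    W m β g t k ≤ 2 * W m β g r k := by
  have h1 : t ≤ r + m := by
    simp only [blk, Nat.add_right_cancel_iff] at hb
    have h := Nat.div_add_mod (r + 1 - 1) m
    have h' := Nat.div_add_mod (t - 1) m
    have := Nat.mod_lt (t - 1) (show 0 < m by omega)
    rw [← hb] at h'
    omega
  have h2 : cI m g t k ≤ cI m g r k + m := by
    have : (Finset.Icc 2 t).filter (fun j => blk m (g j) = k) ⊆
        (Finset.Icc 2 r).filter (fun j => blk m (g j) = k) ∪ Finset.Ioc r t := by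
      intro j hj
      simp only [Finset.mem_filter, Finset.mem_Icc, Finset.mem_union, Finset.mem_Ioc] at hj ⊢
      by_cases h : j ≤ r
      · left; exact ⟨⟨hj.1.1, h⟩, hj.2⟩
      · right; omega
    refine (Finset.card_le_card this).trans ((Finset.card_union_le _ _).trans ?_)
    rw [Nat.card_Ioc]
    unfold cI
    omega
  have h3 : (cI m g t k : ℝ) ≤ cI m g r k + m := by exact_mod_cast h2
  have h4 := W_ge (m := m) hβ g r k
  unfold W at *
  linarith

lemma pr_blk {m : ℕ} {β : ℝ} (hm : 1 ≤ m) (hβ : 0 < β) (g : ℕ → ℕ) {t : ℕ} (ht : 1 ≤ t) (k : ℕ) :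
    ∑ i ∈ Finset.Icc 1 t, pr β g t i * (if blk m i = k then 1 else 0) ≤ W m β g t k / DD β t := by
  have hD := DD_pos hβ ht
  simp only [mul_ite, mul_one, mul_zero]
  rw [← Finset.sum_filter]
  unfold pr
  rw [← Finset.sum_div]
  refine div_le_div_of_nonneg_right ?_ hD.le
  set S := (Finset.Icc 1 t).filter (fun i => blk m i = k) with hS
  have hc : S.card ≤ m := blk_card hm t k
  have hc' : (S.card : ℝ) ≤ m := by exact_mod_cast hc
  rw [Finset.sum_add_distrib, ← Nat.cast_sum]
  have h1 : ∑ i ∈ S, dg g t i ≤ cI m g t k + S.card := by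
    unfold dg
    rw [Finset.sum_add_distrib]
    refine add_le_add ?_ ?_
    · rw [← Finset.card_biUnion]
      · refine Finset.card_le_card ?_
        intro j hj
        simp only [Finset.mem_biUnion, Finset.mem_filter, hS] at hj ⊢
        obtain ⟨i, hi, hj, rfl⟩ := hj
        exact ⟨hj, hi.2⟩
      · intro a _ b _ hab
        rw [Function.onFun, Finset.disjoint_left]
        intro j h1 h2
        simp only [Finset.mem_filter] at h1 h2
        omega
    · rw [Finset.card_eq_sum_ones]
      refine Finset.sum_le_sum fun i _ => ?_
      split_ifs <;> omega
  have h1' : ((∑ i ∈ S, dg g t i : ℕ) : ℝ) ≤ cI m g t k + S.card := by exact_mod_cast h1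
  rw [Finset.sum_const, nsmul_eq_mul]
  unfold W
  nlinarith

lemma pr_le {m : ℕ} {β : ℝ} (hm : 1 ≤ m) (hβ : 0 < β) (g : ℕ → ℕ) {t i : ℕ} (ht : 1 ≤ t)
    (hi : i ∈ Finset.Icc 1 t) : pr β g t i ≤ W m β g t (blk m i) / DD β t := by
  refine le_trans ?_ (pr_blk hm hβ g ht (blk m i))
  have := Finset.single_le_sum (f := fun j => pr β g t j * (if blk m j = blk m i then 1 else 0))
    (fun j _ => mul_nonneg (pr_nonneg hβ ht g j) (by split_ifs <;> norm_num)) hi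
  simpa using this

/-- one step of an affine functional of the indicator -/
lemma step_affine {m : ℕ} {β : ℝ} (hm : 1 ≤ m) (hβ : 0 < β) {g : ℕ → ℕ} {t : ℕ} (ht : 1 ≤ t)
    (hg : Valid t g) (k : ℕ) (c d : ℝ) (hd : 0 ≤ d) :
    ∑ i ∈ Finset.Icc 1 t, pr β g t i * (c + d * (if blk m i = k then 1 else 0))
      ≤ c + d * (W m β g t k / DD β t) := by
  have h := pr_blk hm hβ g ht k
  have : ∑ i ∈ Finset.Icc 1 t, pr β g t i * (c + d * (if blk m i = k then 1 else 0))
      = (∑ i ∈ Finset.Icc 1 t, pr β g t i) * c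
        + d * ∑ i ∈ Finset.Icc 1 t, pr β g t i * (if blk m i = k then 1 else 0) := by
    rw [Finset.sum_mul, Finset.mul_sum, ← Finset.sum_add_distrib]
    exact Finset.sum_congr rfl fun i _ => by ring
  rw [this, pr_sum hβ ht hg, one_mul]
  gcongr

/-! ### Second moment -/

noncomputable def Q (m : ℕ) (β : ℝ) (t : ℕ) (g : ℕ → ℕ) : ℝ :=
  ∑ i ∈ Finset.Icc 1 t, W m β g t (blk m i) * (W m β g t (blk m i) + 1)

noncomputable def C0 (m : ℕ) (β : ℝ) : ℝ := W0 m β * (W0 m β + 1)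

lemma C0_pos {m : ℕ} {β : ℝ} (hm : 1 ≤ m) (hβ : 0 < β) : 0 < C0 m β := by
  have := W0_pos hm hβ
  unfold C0; positivity

lemma Q_step {m : ℕ} {β : ℝ} (hm : 1 ≤ m) (hβ : 0 < β) {g : ℕ → ℕ} {t : ℕ} (ht : 1 ≤ t)
    (hg : Valid t g) :
    ∑ i ∈ Finset.Icc 1 t, pr β g t i * Q m β (t + 1) (Function.update g (t + 1) i)
      ≤ (1 + 2 / DD β t) * Q m β t g + C0 m β := by
  have hD := DD_pos hβ ht
  have key : ∀ i ∈ Finset.Icc 1 t, Q m β (t + 1) (Function.update g (t + 1) i) ≤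
      (∑ i' ∈ Finset.Icc 1 t, (W m β g t (blk m i') * (W m β g t (blk m i') + 1) +
        2 * (W m β g t (blk m i') + 1) * (if blk m i = blk m i' then 1 else 0))) + C0 m β := by
    intro i hi
    unfold Q
    rw [Finset.sum_Icc_succ_top (by omega)]
    refine add_le_add (le_of_eq (Finset.sum_congr rfl fun i' _ => ?_)) ?_
    · rw [W_update _ ht]
      split_ifs <;> ring
    · have h1 := W_le_W0 (β := β) hm (valid_update hg hi) (le_refl (blk m (t + 1)))
      have h2 := W_pos hm hβ (Function.update g (t + 1) i) (t + 1) (blk m (t + 1))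
      have h3 := W0_pos hm hβ
      unfold C0
      gcongr
  calc _ ≤ ∑ i ∈ Finset.Icc 1 t, pr β g t i * ((∑ i' ∈ Finset.Icc 1 t,
        (W m β g t (blk m i') * (W m β g t (blk m i') + 1) +
        2 * (W m β g t (blk m i') + 1) * (if blk m i = blk m i' then 1 else 0))) + C0 m β) :=
        Finset.sum_le_sum fun i hi => mul_le_mul_of_nonneg_left (key i hi) (pr_nonneg hβ ht g i)
    _ = (∑ i' ∈ Finset.Icc 1 t, ∑ i ∈ Finset.Icc 1 t, pr β g t i *
        (W m β g t (blk m i') * (W m β g t (blk m i') + 1) +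
        2 * (W m β g t (blk m i') + 1) * (if blk m i = blk m i' then 1 else 0))) + C0 m β := by
        simp only [mul_add (pr β g t _) (∑ i' ∈ Finset.Icc 1 t, _)]
        rw [Finset.sum_add_distrib, ← Finset.sum_mul, pr_sum hβ ht hg, one_mul]
        simp only [Finset.mul_sum]
        rw [Finset.sum_comm]
    _ ≤ (∑ i' ∈ Finset.Icc 1 t, (W m β g t (blk m i') * (W m β g t (blk m i') + 1) +
        2 * (W m β g t (blk m i') + 1) * (W m β g t (blk m i') / DD β t))) + C0 m β := by
        gcongr with i' hi'
        refine step_affine hm hβ ht hg _ _ _ ?_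
        have := W_pos hm hβ g t (blk m i')
        positivity
    _ = _ := by
        unfold Q
        rw [Finset.mul_sum]
        congr 1
        refine Finset.sum_congr rfl fun i _ => ?_
        ring

lemma EQ_le {m : ℕ} {β : ℝ} (hm : 1 ≤ m) (hβ : 0 < β) {t : ℕ} (ht : 1 ≤ t) :
    EX t β (Q m β t) ≤ C0 m β / β * DD β t := by
  induction t, ht using Nat.le_induction with
  | base =>
    rw [EX_one]
    have h1 : W m β (fun _ => 0) 1 (blk m 1) ≤ W0 m β := by
      unfold W W0 cI; simp
    have h2 := W_pos hm hβ (fun _ => 0) 1 (blk m 1)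
    have : C0 m β / β * DD β 1 = C0 m β := by
      unfold DD; field_simp; push_cast; ring
    rw [this]
    have h3 := W0_pos hm hβ
    simp only [Q, Finset.Icc_self, Finset.sum_singleton, C0]
    gcongr
  | succ t ht ih =>
    have hD := DD_pos hβ ht
    rw [EX_succ ht]
    refine (EX_mono hβ (fun g hg => Q_step hm hβ ht hg)).trans ?_
    rw [EX_add, EX_mul, EX_const hβ ht]
    have h1 : (1 + 2 / DD β t) * EX t β (Q m β t) ≤ (1 + 2 / DD β t) * (C0 m β / β * DD β t) := by
      gcongr
    refine (add_le_add_left h1 _).trans (le_of_eq ?_)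
    have : DD β (t + 1) = DD β t + (2 + β) := by unfold DD; push_cast; ring
    rw [this]
    field_simp
    ring

lemma pair_bound {m : ℕ} {β : ℝ} (hm : 1 ≤ m) (hβ : 0 < β) {t s : ℕ} (hs : 2 ≤ s) (hst : s ≤ t)
    (hb : blk m s = blk m (t + 1)) :
    EX t β (fun g => W m β g t (blk m (g s))) ≤ 2 * (C0 m β / β) := by
  obtain ⟨r, rfl⟩ : ∃ r, s = r + 1 := ⟨s - 1, by omega⟩
  have hr : 1 ≤ r := by omega
  have hD := DD_pos hβ hr
  have hbt : blk m (r + 1) = blk m t :=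
    le_antisymm (blk_mono m hst) (hb ▸ blk_mono m (Nat.le_succ t))
  calc _ ≤ EX t β (fun g => 2 * W m β g r (blk m (g (r + 1)))) :=
        EX_mono hβ fun g _ => W_double hm hβ g _ hr hst hbt
    _ = 2 * EX (r + 1) β (fun g => W m β g r (blk m (g (r + 1)))) := by
        rw [EX_mul, EX_tower hβ (by omega) _ hst]
        intro g k i hk
        rw [W_update_lt _ (by omega), Function.update_of_ne (by omega)]
    _ ≤ 2 * (C0 m β / β) := by
        gcongr
        rw [EX_succ hr]
        have h1 : EX r β (fun g => ∑ i ∈ Finset.Icc 1 r, pr β g r i *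
            W m β (Function.update g (r + 1) i) r (blk m (Function.update g (r + 1) i (r + 1))))
            ≤ EX r β (fun g => (1 / DD β r) * Q m β r g) := by
          refine EX_mono hβ fun g _ => ?_
          unfold Q
          rw [Finset.mul_sum]
          refine Finset.sum_le_sum fun i hi => ?_
          rw [W_update_lt _ (by omega), Function.update_self]
          have h1 := pr_le hm hβ g hr hi
          have h2 := W_pos hm hβ g r (blk m i)
          calc _ ≤ W m β g r (blk m i) / DD β r * W m β g r (blk m i) := by gcongr
            _ ≤ W m β g r (blk m i) / DD β r * (W m β g r (blk m i) + 1) := by gcongr; linarith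
            _ = _ := by ring
        refine h1.trans ?_
        rw [EX_mul]
        have h2 := EQ_le hm hβ hr
        calc _ ≤ 1 / DD β r * (C0 m β / β * DD β r) := by gcongr
          _ = _ := by field_simp

/-! ### The potential -/

noncomputable def Phi (m : ℕ) (β : ℝ) (t : ℕ) (g : ℕ → ℕ) : ℝ :=
  ∑ s ∈ Finset.Icc 2 t, (if blk m (g s) = blk m s then 1 else 0) * W m β g t (blk m s)

noncomputable def MM (m : ℕ) (t : ℕ) (g : ℕ → ℕ) : ℝ :=
  ∑ r ∈ Finset.Icc 2 t, ∑ s ∈ Finset.Ico 2 r,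
    (if blk m s = blk m r then 1 else 0) * (if blk m (g r) = blk m (g s) then 1 else 0)

lemma Phi_step {m : ℕ} {β : ℝ} (hm : 1 ≤ m) (hβ : 0 < β) {g : ℕ → ℕ} {t : ℕ} (ht : 1 ≤ t)
    (hg : Valid t g) :
    ∑ i ∈ Finset.Icc 1 t, pr β g t i * Phi m β (t + 1) (Function.update g (t + 1) i)
      ≤ (1 + 1 / DD β t) * Phi m β t g + W0 m β ^ 2 / DD β t := by
  have hD := DD_pos hβ ht
  have hW0 := W0_pos hm hβ
  set L : ℕ → ℝ := fun s => if blk m (g s) = blk m s then 1 else 0 with hL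
  have hL0 : ∀ s, 0 ≤ L s := fun s => by simp only [hL]; split_ifs <;> norm_num
  have key : ∀ i ∈ Finset.Icc 1 t, Phi m β (t + 1) (Function.update g (t + 1) i) ≤
      (∑ s ∈ Finset.Icc 2 t, (L s * W m β g t (blk m s) +
        L s * (if blk m i = blk m s then 1 else 0))) +
      (0 + W0 m β * (if blk m i = blk m (t + 1) then 1 else 0)) := by
    intro i hi
    unfold Phi
    rw [Finset.sum_Icc_succ_top (by omega)]
    refine add_le_add (le_of_eq (Finset.sum_congr rfl fun s hs => ?_)) ?_
    · rw [Finset.mem_Icc] at hs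
      rw [W_update _ ht, Function.update_of_ne (by omega), mul_add]
    · have h1 := W_le_W0 (β := β) hm (valid_update hg hi) (le_refl (blk m (t + 1)))
      rw [Function.update_self, zero_add, mul_comm]
      gcongr
  calc _ ≤ ∑ i ∈ Finset.Icc 1 t, pr β g t i * ((∑ s ∈ Finset.Icc 2 t, (L s * W m β g t (blk m s) +
        L s * (if blk m i = blk m s then 1 else 0))) +
        (0 + W0 m β * (if blk m i = blk m (t + 1) then 1 else 0))) :=
        Finset.sum_le_sum fun i hi => mul_le_mul_of_nonneg_left (key i hi) (pr_nonneg hβ ht g i)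
    _ = (∑ s ∈ Finset.Icc 2 t, ∑ i ∈ Finset.Icc 1 t, pr β g t i * (L s * W m β g t (blk m s) +
        L s * (if blk m i = blk m s then 1 else 0))) +
        ∑ i ∈ Finset.Icc 1 t, pr β g t i *
          (0 + W0 m β * (if blk m i = blk m (t + 1) then 1 else 0)) := by
        simp only [mul_add (pr β g t _) (∑ s ∈ Finset.Icc 2 t, _)]
        rw [Finset.sum_add_distrib]
        simp only [Finset.mul_sum]
        rw [Finset.sum_comm]
    _ ≤ (∑ s ∈ Finset.Icc 2 t, (L s * W m β g t (blk m s) +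
        L s * (W m β g t (blk m s) / DD β t))) +
        (0 + W0 m β * (W m β g t (blk m (t + 1)) / DD β t)) := by
        refine add_le_add (Finset.sum_le_sum fun s _ => ?_) ?_
        · exact step_affine hm hβ ht hg _ _ _ (hL0 s)
        · exact step_affine hm hβ ht hg _ _ _ hW0.le
    _ ≤ (∑ s ∈ Finset.Icc 2 t, (L s * W m β g t (blk m s) +
        L s * (W m β g t (blk m s) / DD β t))) +
        (0 + W0 m β * (W0 m β / DD β t)) := by
        gcongr
        exact W_le_W0 hm hg (blk_mono m (Nat.le_succ t))
    _ = _ := by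
        unfold Phi
        rw [Finset.mul_sum]
        congr 1
        · refine Finset.sum_congr rfl fun s _ => ?_
          simp only [hL]
          ring
        · ring

lemma MM_step {m : ℕ} {β : ℝ} (hm : 1 ≤ m) (hβ : 0 < β) {g : ℕ → ℕ} {t : ℕ} (ht : 1 ≤ t)
    (hg : Valid t g) :
    ∑ i ∈ Finset.Icc 1 t, pr β g t i * MM m (t + 1) (Function.update g (t + 1) i)
      ≤ MM m t g + ∑ s ∈ Finset.Ico 2 (t + 1), ((if blk m s = blk m (t + 1) then 1 else 0) / DD β t)
          * W m β g t (blk m (g s)) := by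
  have hD := DD_pos hβ ht
  set B : ℕ → ℝ := fun s => if blk m s = blk m (t + 1) then 1 else 0 with hB
  have hB0 : ∀ s, 0 ≤ B s := fun s => by simp only [hB]; split_ifs <;> norm_num
  have key : ∀ i ∈ Finset.Icc 1 t, MM m (t + 1) (Function.update g (t + 1) i) =
      MM m t g + ∑ s ∈ Finset.Ico 2 (t + 1),
        (0 + B s * (if blk m i = blk m (g s) then 1 else 0)) := by
    intro i hi
    unfold MM
    rw [Finset.sum_Icc_succ_top (by omega)]
    congr 1
    · refine Finset.sum_congr rfl fun r hr => Finset.sum_congr rfl fun s hs => ?_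
      rw [Finset.mem_Icc] at hr
      rw [Finset.mem_Ico] at hs
      rw [Function.update_of_ne (by omega), Function.update_of_ne (by omega)]
    · refine Finset.sum_congr rfl fun s hs => ?_
      rw [Finset.mem_Ico] at hs
      rw [Function.update_of_ne (show s ≠ t + 1 by omega), Function.update_self, zero_add]
  calc _ = ∑ i ∈ Finset.Icc 1 t, pr β g t i * (MM m t g + ∑ s ∈ Finset.Ico 2 (t + 1),
        (0 + B s * (if blk m i = blk m (g s) then 1 else 0))) :=
        Finset.sum_congr rfl fun i hi => by rw [key i hi]
    _ = MM m t g + ∑ s ∈ Finset.Ico 2 (t + 1), ∑ i ∈ Finset.Icc 1 t, pr β g t i *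
        (0 + B s * (if blk m i = blk m (g s) then 1 else 0)) := by
        simp only [mul_add (pr β g t _) (MM m t g)]
        rw [Finset.sum_add_distrib, ← Finset.sum_mul, pr_sum hβ ht hg, one_mul]
        simp only [Finset.mul_sum]
        rw [Finset.sum_comm]
    _ ≤ MM m t g + ∑ s ∈ Finset.Ico 2 (t + 1), (0 + B s * (W m β g t (blk m (g s)) / DD β t)) := by
        gcongr with s hs
        exact step_affine hm hβ ht hg _ _ _ (hB0 s)
    _ = _ := by
        congr 1
        refine Finset.sum_congr rfl fun s _ => ?_
        ring

lemma MM_nonneg (m t : ℕ) (g : ℕ → ℕ) : 0 ≤ MM m t g := by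
  unfold MM
  refine Finset.sum_nonneg fun r _ => Finset.sum_nonneg fun s _ => ?_
  split_ifs <;> norm_num

noncomputable def C1 (m : ℕ) (β : ℝ) : ℝ := W0 m β ^ 2 + m * (2 * (C0 m β / β))

lemma C1_pos {m : ℕ} {β : ℝ} (hm : 1 ≤ m) (hβ : 0 < β) : 0 < C1 m β := by
  have := W0_pos hm hβ
  have := C0_pos hm hβ
  unfold C1; positivity

noncomputable def zz (m : ℕ) (β : ℝ) (t : ℕ) : ℝ := EX t β (fun g => Phi m β t g + MM m t g)

lemma zz_one (m : ℕ) (β : ℝ) : zz m β 1 = 0 := by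
  unfold zz
  rw [EX_one]
  simp [Phi, MM]

lemma zz_step {m : ℕ} {β : ℝ} (hm : 1 ≤ m) (hβ : 0 < β) {t : ℕ} (ht : 1 ≤ t) :
    zz m β (t + 1) ≤ (1 + 1 / DD β t) * zz m β t + C1 m β / DD β t := by
  have hD := DD_pos hβ ht
  have hC := C0_pos hm hβ
  unfold zz
  rw [EX_add, EX_add, EX_succ ht, EX_succ ht]
  have h1 := EX_mono hβ (fun g hg => Phi_step hm hβ ht hg)
  have h2 := EX_mono hβ (fun g hg => MM_step hm hβ ht hg)
  rw [EX_add, EX_mul, EX_const hβ ht] at h1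
  rw [EX_add, EX_sum t β (Finset.Ico 2 (t + 1))] at h2
  have h3 : ∑ s ∈ Finset.Ico 2 (t + 1), EX t β (fun g =>
      ((if blk m s = blk m (t + 1) then 1 else 0) / DD β t) * W m β g t (blk m (g s)))
      ≤ m * (2 * (C0 m β / β)) / DD β t := by
    calc _ ≤ ∑ s ∈ Finset.Ico 2 (t + 1), (if blk m s = blk m (t + 1) then
          2 * (C0 m β / β) / DD β t else 0) := by
          refine Finset.sum_le_sum fun s hs => ?_
          rw [Finset.mem_Ico] at hs
          rw [EX_mul]
          split_ifs with h
          · have := pair_bound hm hβ hs.1 (by omega : s ≤ t) h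
            calc _ ≤ 1 / DD β t * (2 * (C0 m β / β)) := by gcongr
              _ = _ := by ring
          · simp
      _ = ((Finset.Ico 2 (t + 1)).filter (fun s => blk m s = blk m (t + 1))).card *
            (2 * (C0 m β / β) / DD β t) := by
          rw [← Finset.sum_filter, Finset.sum_const, nsmul_eq_mul]
      _ ≤ m * (2 * (C0 m β / β) / DD β t) := by
          gcongr
          refine le_trans (Finset.card_le_card ?_) (blk_card hm (t + 1) (blk m (t + 1)))
          refine Finset.filter_subset_filter _ fun s hs => ?_
          simp only [Finset.mem_Ico, Finset.mem_Icc] at hs ⊢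
          omega
      _ = _ := by ring
  have h4 : 0 ≤ EX t β (fun g => MM m t g) := by
    have := EX_mono hβ (N := t) (X := fun _ => 0) (Y := MM m t) (fun g _ => MM_nonneg m t g)
    rwa [EX_const hβ ht] at this
  have h5 : 0 ≤ 1 / DD β t * EX t β (fun g => MM m t g) := by positivity
  have h6 : C1 m β / DD β t = W0 m β ^ 2 / DD β t + m * (2 * (C0 m β / β)) / DD β t := by
    unfold C1; ring
  rw [h6]
  have e : EX t β (fun g => MM m t g) = EX t β (MM m t) := rfl
  have e' : EX t β (fun g => Phi m β t g) = EX t β (Phi m β t) := rfl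
  rw [e] at *
  rw [e'] at *
  nlinarith

lemma growth {α : ℝ} (h0 : 0 < α) (h1 : α < 1) {y : ℝ} (hy : 1 < y) :
    (1 + α / (y - α)) * (y - 1) ^ α ≤ y ^ α := by
  have h2 : (1 + -(1 / y)) ^ α ≤ 1 + α * (-(1 / y)) := by
    apply rpow_one_add_le_one_add_mul_self
    · have : 1 / y ≤ 1 := by rw [div_le_one (by linarith)]; linarith
      linarith
    · exact h0.le
    · exact h1.le
  have h3 : (y - 1) = y * (1 + -(1 / y)) := by field_simp; ring
  have h4 : 0 ≤ 1 + -(1 / y) := by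
    have : 1 / y ≤ 1 := by rw [div_le_one (by linarith)]; linarith
    linarith
  have hyp : 0 < y ^ α := by positivity
  rw [h3, Real.mul_rpow (by linarith) h4]
  have h5 : 0 < y - α := by linarith
  calc _ ≤ (1 + α / (y - α)) * (y ^ α * (1 + α * (-(1 / y)))) := by gcongr
    _ = y ^ α := by field_simp; ring

lemma zz_bound {m : ℕ} {β : ℝ} (hm : 1 ≤ m) (hβ : 0 < β) :
    ∃ A : ℝ, 0 < A ∧ ∀ t : ℕ, 1 ≤ t → zz m β t ≤ A * (t : ℝ) ^ (1 / (2 + β)) := by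
  have hC := C1_pos hm hβ
  set α : ℝ := 1 / (2 + β) with hα
  have ha0 : 0 < α := by positivity
  have ha1 : α < 1 := by rw [hα, div_lt_one (by linarith)]; linarith
  have hx : 0 < (1 - α) ^ α := Real.rpow_pos_of_pos (by linarith) _
  set A := (1 + 1 / β) * C1 m β / (1 - α) ^ α with hA
  have hA0 : 0 < A := by positivity
  have key : ∀ t : ℕ, 2 ≤ t → zz m β t + C1 m β ≤ A * ((t : ℝ) - 1 - α) ^ α := by
    intro t ht
    induction t, ht using Nat.le_induction with
    | base =>
      have h := zz_step hm hβ (le_refl 1)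
      rw [zz_one] at h
      have hd : DD β 1 = β := by unfold DD; push_cast; ring
      rw [hd] at h
      have e : ((2 : ℕ) : ℝ) - 1 - α = 1 - α := by push_cast; ring
      rw [e, hA, div_mul_cancel₀ _ hx.ne']
      have : (1 + 1 / β) * C1 m β = C1 m β / β + C1 m β := by ring
      rw [this]
      norm_num at h ⊢
      exact h
    | succ t ht ih =>
      have h := zz_step hm hβ (show 1 ≤ t by omega)
      have hD := DD_pos hβ (show 1 ≤ t by omega)
      have ht' : (2 : ℝ) ≤ t := by exact_mod_cast ht
      have hg := growth ha0 ha1 (y := (t : ℝ) - α) (by linarith)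
      have e1 : α / ((t : ℝ) - α - α) = 1 / DD β t := by
        have hz : (2 + β) * (t : ℝ) - 2 ≠ 0 := hD.ne'
        have : (t : ℝ) - α - α = ((2 + β) * (t : ℝ) - 2) / (2 + β) := by
          rw [hα]; field_simp; ring
        rw [this, hα]
        unfold DD
        field_simp
      rw [e1] at hg
      have e2 : (t : ℝ) - α - 1 = (t : ℝ) - 1 - α := by ring
      rw [e2] at hg
      push_cast
      have e3 : (t : ℝ) + 1 - 1 - α = (t : ℝ) - α := by ring
      rw [e3]
      calc _ ≤ (1 + 1 / DD β t) * (zz m β t + C1 m β) := by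
            have : (1 + 1 / DD β t) * (zz m β t + C1 m β) =
              (1 + 1 / DD β t) * zz m β t + C1 m β / DD β t + C1 m β := by ring
            linarith
        _ ≤ (1 + 1 / DD β t) * (A * ((t : ℝ) - 1 - α) ^ α) := by gcongr
        _ = A * ((1 + 1 / DD β t) * ((t : ℝ) - 1 - α) ^ α) := by ring
        _ ≤ _ := by gcongr
  refine ⟨A, hA0, fun t ht => ?_⟩
  rcases ht.eq_or_lt with rfl | h
  · rw [zz_one]; positivity
  · have h2 : (2 : ℝ) ≤ t := by exact_mod_cast h
    have := key t h
    have h3 : A * ((t : ℝ) - 1 - α) ^ α ≤ A * (t : ℝ) ^ α := by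
      gcongr
      · linarith
      · linarith
    linarith

/-! ### Pathwise identities -/

lemma pair_sumA (F : ℕ → ℕ → ℝ) (hF : ∀ a b, F a b = F b a) (n : ℕ) :
    ∑ a ∈ Finset.Icc 1 n, ∑ b ∈ Finset.Icc 1 n, F a b
      = ∑ a ∈ Finset.Icc 1 n, F a a + 2 * ∑ a ∈ Finset.Icc 1 n, ∑ b ∈ Finset.Ioc a n, F a b := by
  induction n with
  | zero => simp
  | succ n ih =>
    have h1 : ∑ a ∈ Finset.Icc 1 n, ∑ b ∈ Finset.Ioc a (n + 1), F a b
        = ∑ a ∈ Finset.Icc 1 n, (∑ b ∈ Finset.Ioc a n, F a b + F a (n + 1)) := by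
      refine Finset.sum_congr rfl fun a ha => ?_
      rw [Finset.mem_Icc] at ha
      rw [Finset.sum_Ioc_succ_top (by omega)]
    have h2 : ∑ b ∈ Finset.Icc 1 n, F (n + 1) b = ∑ b ∈ Finset.Icc 1 n, F b (n + 1) :=
      Finset.sum_congr rfl fun b _ => hF _ _
    simp only [Finset.sum_Icc_succ_top (show 1 ≤ n + 1 by omega)]
    rw [h1, Finset.sum_add_distrib, Finset.sum_add_distrib, ih, h2]
    simp
    ring

lemma pair_sumB (F : ℕ → ℕ → ℝ) (hF : ∀ a b, F a b = F b a) (n : ℕ) :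
    ∑ a ∈ Finset.Icc 2 n, ∑ b ∈ Finset.Icc 2 n, F a b
      = ∑ a ∈ Finset.Icc 2 n, F a a + 2 * ∑ b ∈ Finset.Icc 2 n, ∑ a ∈ Finset.Ico 2 b, F a b := by
  induction n with
  | zero => simp
  | succ n ih =>
    rcases Nat.lt_or_ge (n + 1) 2 with h | h
    · rw [Finset.Icc_eq_empty (by omega)]; simp
    have h2 : ∑ b ∈ Finset.Icc 2 n, F (n + 1) b = ∑ b ∈ Finset.Icc 2 n, F b (n + 1) :=
      Finset.sum_congr rfl fun b _ => hF _ _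
    have h3 : Finset.Ico 2 (n + 1) = Finset.Icc 2 n := by
      ext; simp only [Finset.mem_Ico, Finset.mem_Icc]; omega
    simp only [Finset.sum_Icc_succ_top h]
    rw [Finset.sum_add_distrib, ih, h2, h3]
    ring

lemma triple_sum (μ : ℕ → ℕ → ℝ) (hs : ∀ a b, μ a b = μ b a) (hd : ∀ a, μ a a = 0) (n : ℕ) :
    2 * ∑ a ∈ Finset.Icc 1 n, ∑ b ∈ Finset.Ioc a n, ∑ c ∈ Finset.Ioc b n,
      (μ a b * μ a c + μ a b * μ b c + μ a c * μ b c)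
    = ∑ v ∈ Finset.Icc 1 n, ((∑ u ∈ Finset.Icc 1 n, μ v u) ^ 2
        - ∑ u ∈ Finset.Icc 1 n, μ v u ^ 2) := by
  induction n with
  | zero => simp
  | succ n ih =>
    set G : ℕ → ℕ → ℕ → ℝ := fun a b c => μ a b * μ a c + μ a b * μ b c + μ a c * μ b c with hG
    set x : ℕ → ℝ := fun a => μ a (n + 1) with hx
    have h1 : ∑ a ∈ Finset.Icc 1 (n + 1), ∑ b ∈ Finset.Ioc a (n + 1), ∑ c ∈ Finset.Ioc b (n + 1),
        G a b c = ∑ a ∈ Finset.Icc 1 n, ∑ b ∈ Finset.Ioc a n, ∑ c ∈ Finset.Ioc b n, G a b c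
          + ∑ a ∈ Finset.Icc 1 n, ∑ b ∈ Finset.Ioc a n, G a b (n + 1) := by
      rw [Finset.sum_Icc_succ_top (by omega), ← Finset.sum_add_distrib]
      simp only [Finset.Ioc_self, Finset.sum_empty, add_zero]
      refine Finset.sum_congr rfl fun a ha => ?_
      rw [Finset.mem_Icc] at ha
      rw [Finset.sum_Ioc_succ_top (by omega), ← Finset.sum_add_distrib]
      simp only [Finset.Ioc_self, Finset.sum_empty, add_zero]
      refine Finset.sum_congr rfl fun b hb => ?_
      rw [Finset.mem_Ioc] at hb
      rw [Finset.sum_Ioc_succ_top (by omega)]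
    have h2 := pair_sumA (fun a b => G a b (n + 1)) (fun a b => by
      simp only [hG]; rw [hs b a]; ring) n
    have h3 : ∑ a ∈ Finset.Icc 1 n, ∑ b ∈ Finset.Icc 1 n, G a b (n + 1)
        = 2 * ∑ a ∈ Finset.Icc 1 n, (∑ b ∈ Finset.Icc 1 n, μ a b) * x a
          + (∑ a ∈ Finset.Icc 1 n, x a) ^ 2 := by
      have e1 : ∑ a ∈ Finset.Icc 1 n, ∑ b ∈ Finset.Icc 1 n, μ a b * x b
          = ∑ a ∈ Finset.Icc 1 n, (∑ b ∈ Finset.Icc 1 n, μ a b) * x a := by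
        rw [Finset.sum_comm]
        refine Finset.sum_congr rfl fun a _ => ?_
        rw [Finset.sum_mul]
        exact Finset.sum_congr rfl fun b _ => by rw [hs]
      have e2 : ∑ a ∈ Finset.Icc 1 n, ∑ b ∈ Finset.Icc 1 n, μ a b * x a
          = ∑ a ∈ Finset.Icc 1 n, (∑ b ∈ Finset.Icc 1 n, μ a b) * x a := by
        simp only [Finset.sum_mul]
      simp only [hG, Finset.sum_add_distrib]
      change ∑ a ∈ Finset.Icc 1 n, ∑ b ∈ Finset.Icc 1 n, μ a b * x a
        + ∑ a ∈ Finset.Icc 1 n, ∑ b ∈ Finset.Icc 1 n, μ a b * x b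
        + ∑ a ∈ Finset.Icc 1 n, ∑ b ∈ Finset.Icc 1 n, x a * x b = _
      rw [e1, e2, ← Finset.sum_mul_sum]
      ring
    have h4 : ∑ a ∈ Finset.Icc 1 n, G a a (n + 1) = ∑ a ∈ Finset.Icc 1 n, x a ^ 2 := by
      refine Finset.sum_congr rfl fun a _ => ?_
      simp only [hG, hd, hx]; ring
    have h5 : ∑ v ∈ Finset.Icc 1 (n + 1), ((∑ u ∈ Finset.Icc 1 (n + 1), μ v u) ^ 2
        - ∑ u ∈ Finset.Icc 1 (n + 1), μ v u ^ 2)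
        = ∑ v ∈ Finset.Icc 1 n, ((∑ u ∈ Finset.Icc 1 n, μ v u) ^ 2
        - ∑ u ∈ Finset.Icc 1 n, μ v u ^ 2)
        + 2 * ∑ a ∈ Finset.Icc 1 n, (∑ b ∈ Finset.Icc 1 n, μ a b) * x a
        + (∑ a ∈ Finset.Icc 1 n, x a) ^ 2 - ∑ a ∈ Finset.Icc 1 n, x a ^ 2 := by
      simp only [Finset.sum_Icc_succ_top (show 1 ≤ n + 1 by omega), hd]
      have e3 : ∀ u, μ (n + 1) u = x u := fun u => hs _ _
      simp only [e3]
      have e4 : ∀ u, μ u (n + 1) = x u := fun u => rfl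
      simp only [e4]
      have : ∑ v ∈ Finset.Icc 1 n, ((∑ u ∈ Finset.Icc 1 n, μ v u + x v) ^ 2
          - (∑ u ∈ Finset.Icc 1 n, μ v u ^ 2 + x v ^ 2))
          = ∑ v ∈ Finset.Icc 1 n, ((∑ u ∈ Finset.Icc 1 n, μ v u) ^ 2
            - ∑ u ∈ Finset.Icc 1 n, μ v u ^ 2)
            + 2 * ∑ a ∈ Finset.Icc 1 n, (∑ b ∈ Finset.Icc 1 n, μ a b) * x a := by
        rw [Finset.mul_sum, ← Finset.sum_add_distrib]
        exact Finset.sum_congr rfl fun v _ => by ring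
      rw [this]
      ring
    rw [h1, h5, mul_add, ih]
    linarith

/-- number of edges directed from block `v` to block `u` -/
def ed (N m : ℕ) (g : ℕ → ℕ) (v u : ℕ) : ℕ :=
  ((Finset.Icc 2 N).filter (fun t => blk m t = v ∧ blk m (g t) = u)).card

lemma ed_eq (N m : ℕ) (g : ℕ → ℕ) (v u : ℕ) :
    (ed N m g v u : ℝ) = ∑ t ∈ Finset.Icc 2 N,
      (if blk m t = v then 1 else 0) * (if blk m (g t) = u then 1 else 0) := by
  unfold ed
  rw [Finset.card_filter]
  push_cast
  refine Finset.sum_congr rfl fun t _ => ?_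
  split_ifs <;> simp_all

lemma ed_zero {N m : ℕ} {g : ℕ → ℕ} (hg : Valid N g) {v u : ℕ} (h : v < u) : ed N m g v u = 0 := by
  unfold ed
  rw [Finset.card_eq_zero, Finset.filter_eq_empty_iff]
  rintro t ht ⟨rfl, rfl⟩
  rw [Finset.mem_Icc] at ht
  have := blk_mono m (hg t ht.1 ht.2).2.le
  omega

lemma mult_eq {n m : ℕ} (f : ParentSeq (n * m)) {a b : ℕ} (hab : a ≠ b) :
    mult n m f a b = ed (n * m) m (pval f) a b + ed (n * m) m (pval f) b a := by
  unfold mult ed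
  rw [Finset.filter_or, Finset.card_union_of_disjoint]
  rw [Finset.disjoint_left]
  intro t h1 h2
  simp only [Finset.mem_filter] at h1 h2
  omega

lemma blk_mem {n m i : ℕ} (hm : 1 ≤ m) (hi : 1 ≤ i) (hi' : i ≤ n * m) :
    blk m i ∈ Finset.Icc 1 n := by
  have : (i - 1) / m < n := by
    rw [Nat.div_lt_iff_lt_mul (by omega)]; omega
  rw [Finset.mem_Icc]
  unfold blk
  exact ⟨Nat.succ_le_succ (Nat.zero_le _), this⟩

lemma degU_eq {n m : ℕ} (hm : 1 ≤ m) (f : ParentSeq (n * m)) (v : ℕ) :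
    degU n m f v = ∑ u ∈ Finset.Icc 1 n, ed (n * m) m (pval f) v u
      + ∑ u ∈ Finset.Icc 1 n, ed (n * m) m (pval f) u v := by
  have hg := pval_valid f
  unfold degU
  congr 1
  · rw [Finset.card_eq_sum_card_fiberwise (f := fun t => blk m (pval f t)) (t := Finset.Icc 1 n)]
    · refine Finset.sum_congr rfl fun u _ => ?_
      rw [Finset.filter_filter]; rfl
    · intro t ht
      simp only [Finset.coe_filter, Finset.mem_Icc, Set.mem_ofPred_eq] at ht
      have := hg t ht.1.1 ht.1.2
      exact Finset.mem_coe.2 (blk_mem hm this.1 (by omega))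
  · rw [Finset.card_eq_sum_card_fiberwise (f := fun t => blk m t) (t := Finset.Icc 1 n)]
    · refine Finset.sum_congr rfl fun u _ => ?_
      rw [Finset.filter_filter]
      unfold ed
      congr 1
      refine Finset.filter_congr fun t _ => ?_
      tauto
    · intro t ht
      simp only [Finset.coe_filter, Finset.mem_Icc, Set.mem_ofPred_eq] at ht
      exact Finset.mem_coe.2 (blk_mem hm (by omega) (by omega))

/-- undirected multiplicity, without loops -/
def mu (N m : ℕ) (g : ℕ → ℕ) (v u : ℕ) : ℕ :=
  if v = u then 0 else ed N m g v u + ed N m g u v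

lemma degU_eq' {n m : ℕ} (hm : 1 ≤ m) (f : ParentSeq (n * m)) {v : ℕ} (hv : v ∈ Finset.Icc 1 n) :
    degU n m f v = ∑ u ∈ Finset.Icc 1 n, mu (n * m) m (pval f) v u
      + 2 * ed (n * m) m (pval f) v v := by
  rw [degU_eq hm, ← Finset.sum_add_distrib, ← Finset.add_sum_erase _ _ hv,
    ← Finset.add_sum_erase _ (fun u => mu (n * m) m (pval f) v u) hv]
  have : ∑ u ∈ (Finset.Icc 1 n).erase v, (ed (n * m) m (pval f) v u + ed (n * m) m (pval f) u v)
      = ∑ u ∈ (Finset.Icc 1 n).erase v, mu (n * m) m (pval f) v u := by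
    refine Finset.sum_congr rfl fun u hu => ?_
    rw [Finset.mem_erase] at hu
    unfold mu
    rw [if_neg (Ne.symm hu.1)]
  rw [this]
  simp only [mu, if_true]
  ring

/-- The number of degenerate pairs. -/
noncomputable def XX (n m : ℕ) (f : ParentSeq (n * m)) : ℝ :=
  (∑ i ∈ Finset.Icc 1 n, (Nat.choose (degU n m f i) 2 : ℝ))
            - ∑ a ∈ Finset.Icc 1 n, ∑ b ∈ Finset.Ioc a n, ∑ c ∈ Finset.Ioc b n,
                ((mult n m f a b : ℝ) * (mult n m f a c : ℝ)
                  + (mult n m f a b : ℝ) * (mult n m f b c : ℝ)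
                  + (mult n m f a c : ℝ) * (mult n m f b c : ℝ))

lemma XX_eq {n m : ℕ} (hm : 1 ≤ m) (f : ParentSeq (n * m)) :
    XX n m f = ∑ v ∈ Finset.Icc 1 n,
      ((∑ u ∈ Finset.Icc 1 n,
        (mu (n * m) m (pval f) v u : ℝ) * ((mu (n * m) m (pval f) v u : ℝ) - 1)) / 2
      + (ed (n * m) m (pval f) v v : ℝ) *
        (2 * ∑ u ∈ Finset.Icc 1 n, (mu (n * m) m (pval f) v u : ℝ)
          + 2 * (ed (n * m) m (pval f) v v : ℝ) - 1)) := by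
  have h1 := triple_sum (fun a b => (mu (n * m) m (pval f) a b : ℝ))
    (fun a b => by
      simp only [mu, eq_comm (a := b) (b := a)]
      rw [add_comm]) (fun a => by simp [mu]) n
  have h2 : ∑ a ∈ Finset.Icc 1 n, ∑ b ∈ Finset.Ioc a n, ∑ c ∈ Finset.Ioc b n,
                ((mult n m f a b : ℝ) * (mult n m f a c : ℝ)
                  + (mult n m f a b : ℝ) * (mult n m f b c : ℝ)
                  + (mult n m f a c : ℝ) * (mult n m f b c : ℝ))
      = ∑ a ∈ Finset.Icc 1 n, ∑ b ∈ Finset.Ioc a n, ∑ c ∈ Finset.Ioc b n,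
        ((mu (n * m) m (pval f) a b : ℝ) * (mu (n * m) m (pval f) a c : ℝ)
        + (mu (n * m) m (pval f) a b : ℝ) * (mu (n * m) m (pval f) b c : ℝ)
        + (mu (n * m) m (pval f) a c : ℝ) * (mu (n * m) m (pval f) b c : ℝ)) := by
    have e : ∀ a b, a < b → mult n m f a b = mu (n * m) m (pval f) a b := fun a b h => by
      rw [mult_eq f h.ne, mu, if_neg h.ne]
    refine Finset.sum_congr rfl fun a _ => Finset.sum_congr rfl fun b hb =>
      Finset.sum_congr rfl fun c hc => ?_
    rw [Finset.mem_Ioc] at hb hc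
    rw [e a b hb.1, e b c hc.1, e a c (by omega)]
  have h3 : ∑ i ∈ Finset.Icc 1 n, (Nat.choose (degU n m f i) 2 : ℝ) = ∑ v ∈ Finset.Icc 1 n,
      (∑ u ∈ Finset.Icc 1 n, (mu (n * m) m (pval f) v u : ℝ)
        + 2 * (ed (n * m) m (pval f) v v : ℝ)) *
      (∑ u ∈ Finset.Icc 1 n, (mu (n * m) m (pval f) v u : ℝ)
        + 2 * (ed (n * m) m (pval f) v v : ℝ) - 1) / 2 := by
    refine Finset.sum_congr rfl fun v hv => ?_
    rw [Nat.cast_choose_two, degU_eq' hm f hv]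
    push_cast
    rfl
  unfold XX
  rw [h2, h3]
  have h4 : ∀ a b c : ℝ, 2 * b = c → a - b = a - c / 2 := fun a b c h => by linarith
  rw [h4 _ _ _ h1, Finset.sum_div, ← Finset.sum_sub_distrib]
  refine Finset.sum_congr rfl fun v _ => ?_
  have h5 : ∑ u ∈ Finset.Icc 1 n,
        (mu (n * m) m (pval f) v u : ℝ) * ((mu (n * m) m (pval f) v u : ℝ) - 1)
      = ∑ u ∈ Finset.Icc 1 n, (mu (n * m) m (pval f) v u : ℝ) ^ 2
        - ∑ u ∈ Finset.Icc 1 n, (mu (n * m) m (pval f) v u : ℝ) := by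
    rw [← Finset.sum_sub_distrib]
    exact Finset.sum_congr rfl fun u _ => by ring
  rw [h5]
  ring

lemma nat_mul_pred_nonneg (a : ℕ) : (0 : ℝ) ≤ (a : ℝ) * ((a : ℝ) - 1) := by
  rcases Nat.eq_zero_or_pos a with rfl | h
  · simp
  · have : (1 : ℝ) ≤ a := by exact_mod_cast h
    apply mul_nonneg <;> linarith

lemma XX_nonneg {n m : ℕ} (hm : 1 ≤ m) (f : ParentSeq (n * m)) : 0 ≤ XX n m f := by
  rw [XX_eq hm]
  refine Finset.sum_nonneg fun v _ => add_nonneg ?_ ?_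
  · exact div_nonneg (Finset.sum_nonneg fun u _ => nat_mul_pred_nonneg _) (by norm_num)
  · have h1 := nat_mul_pred_nonneg (ed (n * m) m (pval f) v v)
    have h2 : (0 : ℝ) ≤ ∑ u ∈ Finset.Icc 1 n, (mu (n * m) m (pval f) v u : ℝ) := by positivity
    have h3 : (0 : ℝ) ≤ ed (n * m) m (pval f) v v := by positivity
    nlinarith [mul_nonneg h3 h2]

lemma sum_ite_mem {n x : ℕ} (hx : x ∈ Finset.Icc 1 n) (F : ℕ → ℝ) :
    ∑ v ∈ Finset.Icc 1 n, (if x = v then 1 else 0) * F v = F x := by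
  simp only [ite_mul, one_mul, zero_mul]
  rw [Finset.sum_ite_eq, if_pos hx]

lemma sum_ed_sq {n m : ℕ} (hm : 1 ≤ m) {g : ℕ → ℕ} (hg : Valid (n * m) g) :
    ∑ v ∈ Finset.Icc 1 n, ∑ u ∈ Finset.Icc 1 n,
      (ed (n * m) m g v u : ℝ) * ((ed (n * m) m g v u : ℝ) - 1) = 2 * MM m (n * m) g := by
  have hb : ∀ t ∈ Finset.Icc 2 (n * m), blk m t ∈ Finset.Icc 1 n := fun t ht => by
    rw [Finset.mem_Icc] at ht
    exact blk_mem hm (by omega) (by omega)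
  have hb' : ∀ t ∈ Finset.Icc 2 (n * m), blk m (g t) ∈ Finset.Icc 1 n := fun t ht => by
    rw [Finset.mem_Icc] at ht
    have := hg t ht.1 ht.2
    exact blk_mem hm (by omega) (by omega)
  have key : ∀ (c : ℕ → ℕ → ℝ), ∑ v ∈ Finset.Icc 1 n, ∑ u ∈ Finset.Icc 1 n,
      (ed (n * m) m g v u : ℝ) * c v u = ∑ t ∈ Finset.Icc 2 (n * m), c (blk m t) (blk m (g t)) := by
    intro c
    simp only [ed_eq, Finset.sum_mul]
    rw [Finset.sum_congr rfl fun v _ => Finset.sum_comm, Finset.sum_comm]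
    refine Finset.sum_congr rfl fun t ht => ?_
    simp only [mul_assoc, ← Finset.mul_sum]
    rw [sum_ite_mem (hb t ht) (fun v => ∑ u ∈ Finset.Icc 1 n,
      (if blk m (g t) = u then 1 else 0) * c v u), sum_ite_mem (hb' t ht)]
  rw [key (fun v u => (ed (n * m) m g v u : ℝ) - 1)]
  simp only [ed_eq]
  rw [Finset.sum_sub_distrib]
  have h := pair_sumB (fun t s => (if blk m s = blk m t then (1:ℝ) else 0) *
    (if blk m (g s) = blk m (g t) then 1 else 0)) (fun a b => by
      simp only [eq_comm (a := blk m a), eq_comm (a := blk m (g a))]) (n * m)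
  rw [h]
  simp only [if_true, mul_one, add_sub_cancel_left]
  unfold MM
  congr 1
  refine Finset.sum_congr rfl fun r _ => Finset.sum_congr rfl fun s _ => ?_
  simp only [eq_comm (a := blk m s)]

lemma sum_loop {n m : ℕ} (hm : 1 ≤ m) (β : ℝ) (g : ℕ → ℕ) :
    ∑ v ∈ Finset.Icc 1 n, (ed (n * m) m g v v : ℝ) * W m β g (n * m) v = Phi m β (n * m) g := by
  simp only [ed_eq, Finset.sum_mul]
  rw [Finset.sum_comm]
  unfold Phi
  refine Finset.sum_congr rfl fun t ht => ?_
  rw [Finset.mem_Icc] at ht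
  simp only [mul_assoc]
  rw [sum_ite_mem (blk_mem hm (by omega) (by omega))
    (fun v => (if blk m (g t) = v then 1 else 0) * W m β g (n * m) v)]

lemma XX_le {n m : ℕ} (hm : 1 ≤ m) {β : ℝ} (hβ : 0 < β) (f : ParentSeq (n * m)) :
    XX n m f ≤ 2 * (Phi m β (n * m) (pval f) + MM m (n * m) (pval f)) := by
  have hg := pval_valid f
  rw [XX_eq hm, Finset.sum_add_distrib]
  have hdeg : ∀ v ∈ Finset.Icc 1 n, ∑ u ∈ Finset.Icc 1 n, mu (n * m) m (pval f) v u
      + 2 * ed (n * m) m (pval f) v v ≤ m + cI m (pval f) (n * m) v := by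
    intro v hv
    rw [← degU_eq' hm f hv]
    unfold degU cI
    refine add_le_add ?_ le_rfl
    refine le_trans (Finset.card_le_card ?_) (blk_card hm (n * m) v)
    refine Finset.filter_subset_filter _ fun s hs => ?_
    simp only [Finset.mem_Icc] at hs ⊢
    omega
  set g := pval f with hgd
  set N := n * m with hN
  have h1 : ∑ v ∈ Finset.Icc 1 n, (∑ u ∈ Finset.Icc 1 n,
      (mu N m g v u : ℝ) * ((mu N m g v u : ℝ) - 1)) / 2 ≤ 2 * MM m N g := by
    have e : ∀ v u, (mu N m g v u : ℝ) * ((mu N m g v u : ℝ) - 1) ≤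
        (ed N m g v u : ℝ) * ((ed N m g v u : ℝ) - 1)
        + (ed N m g u v : ℝ) * ((ed N m g u v : ℝ) - 1) := by
      intro v u
      rcases lt_trichotomy v u with h | h | h
      · simp [mu, h.ne, ed_zero hg h]
      · subst h
        have := nat_mul_pred_nonneg (ed N m g v v)
        simp only [mu, if_true, Nat.cast_zero, zero_mul]
        linarith
      · simp [mu, h.ne', ed_zero hg h]
    have h2 := sum_ed_sq hm hg
    have h3 : ∑ v ∈ Finset.Icc 1 n, ∑ u ∈ Finset.Icc 1 n,
      (ed N m g u v : ℝ) * ((ed N m g u v : ℝ) - 1) = 2 * MM m N g := by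
      rw [Finset.sum_comm]; exact h2
    rw [← Finset.sum_div]
    have h4 : ∑ v ∈ Finset.Icc 1 n, ∑ u ∈ Finset.Icc 1 n,
      (mu N m g v u : ℝ) * ((mu N m g v u : ℝ) - 1) ≤ ∑ v ∈ Finset.Icc 1 n, ∑ u ∈ Finset.Icc 1 n,
        ((ed N m g v u : ℝ) * ((ed N m g v u : ℝ) - 1)
        + (ed N m g u v : ℝ) * ((ed N m g u v : ℝ) - 1)) :=
      Finset.sum_le_sum fun v _ => Finset.sum_le_sum fun u _ => e v u
    simp only [Finset.sum_add_distrib] at h4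
    rw [h2, h3] at h4
    linarith
  have h2 : ∑ v ∈ Finset.Icc 1 n, (ed N m g v v : ℝ) *
        (2 * ∑ u ∈ Finset.Icc 1 n, (mu N m g v u : ℝ) + 2 * (ed N m g v v : ℝ) - 1)
      ≤ 2 * Phi m β N g := by
    rw [← sum_loop hm, Finset.mul_sum]
    refine Finset.sum_le_sum fun v hv => ?_
    have e2 := hdeg v hv
    have e3 : (∑ u ∈ Finset.Icc 1 n, (mu N m g v u : ℝ)) + 2 * (ed N m g v v : ℝ)
        ≤ m + cI m g N v := by exact_mod_cast e2
    have e4 : (m : ℝ) + cI m g N v ≤ W m β g N v := by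
      unfold W
      have : (0 : ℝ) ≤ m * β := by positivity
      linarith
    have e5 : (0 : ℝ) ≤ ed N m g v v := by positivity
    have e6 : 2 * ∑ u ∈ Finset.Icc 1 n, (mu N m g v u : ℝ) + 2 * (ed N m g v v : ℝ) - 1
        ≤ 2 * W m β g N v := by linarith
    calc _ ≤ (ed N m g v v : ℝ) * (2 * W m β g N v) := by gcongr
      _ = _ := by ring
  linarith

/-- The expected number of degenerate pairs of adjacent half-edges of `G^n_{m,β}`, i.e. the
difference between `Σ_i binom(d(u_i),2)` and the number of non-degenerate pairs, is
nonnegative and is `O(n^{1/(2+β)})`. -/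
theorem expected_degenerate_pairs (β : ℝ) (hβ : 0 < β) (m : ℕ) (hm : 1 ≤ m) :
    ∃ K : ℝ, 0 < K ∧ ∀ n : ℕ, 1 ≤ n →
      0 ≤ moriE (n * m) β
          (fun f => (∑ i ∈ Finset.Icc 1 n, (Nat.choose (degU n m f i) 2 : ℝ))
            - ∑ a ∈ Finset.Icc 1 n, ∑ b ∈ Finset.Ioc a n, ∑ c ∈ Finset.Ioc b n,
                ((mult n m f a b : ℝ) * (mult n m f a c : ℝ)
                  + (mult n m f a b : ℝ) * (mult n m f b c : ℝ)
                  + (mult n m f a c : ℝ) * (mult n m f b c : ℝ))) ∧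
      moriE (n * m) β
          (fun f => (∑ i ∈ Finset.Icc 1 n, (Nat.choose (degU n m f i) 2 : ℝ))
            - ∑ a ∈ Finset.Icc 1 n, ∑ b ∈ Finset.Ioc a n, ∑ c ∈ Finset.Ioc b n,
                ((mult n m f a b : ℝ) * (mult n m f a c : ℝ)
                  + (mult n m f a b : ℝ) * (mult n m f b c : ℝ)
                  + (mult n m f a c : ℝ) * (mult n m f b c : ℝ)))
        ≤ K * (n : ℝ) ^ (1 / (2 + β)) := by
  obtain ⟨A, hA, hz⟩ := zz_bound hm hβ
  have hm0 : (0 : ℝ) < m := by exact_mod_cast hm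
  refine ⟨2 * A * (m : ℝ) ^ (1 / (2 + β)), by positivity, fun n hn => ⟨?_, ?_⟩⟩
  · exact Finset.sum_nonneg fun f _ => mul_nonneg (moriP_nonneg hβ f) (XX_nonneg hm f)
  · have h1 : moriE (n * m) β (XX n m) ≤ 2 * zz m β (n * m) := by
      unfold zz
      rw [← EX_mul]
      exact Finset.sum_le_sum fun f _ =>
        mul_le_mul_of_nonneg_left (XX_le hm hβ f) (moriP_nonneg hβ f)
    have h2 := hz (n * m) (Nat.mul_pos hn hm)
    rw [Nat.cast_mul, Real.mul_rpow (by positivity) (by positivity)] at h2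
    refine h1.trans ?_
    calc 2 * zz m β (n * m) ≤ 2 * (A * ((n : ℝ) ^ (1 / (2 + β)) * (m : ℝ) ^ (1 / (2 + β)))) := by
          gcongr
      _ = _ := by ring
end

section
/- Let β > 0, let s ≥ 1 be an integer, let (Ω, F, P) be a probability space with a filtration (F_t)_{t≥s}, and let (a_t)_{t≥s} and (b_t)_{t≥s} be adapted real-valued stochastic processes with a_s = b_s = 1 almost surely and 1 ≤ a_t ≤ t and 1 ≤ b_t ≤ t almost surely for all t ≥ s, such that for every integer t ≥ s, almost surely E[a_{t+1} | F_t] = a_t·(1 + 1/((2+β)t − 2)), E[b_{t+1} | F_t] = b_t·(1 + 1/((2+β)t − 2)), and E[a_{t+1}·b_{t+1} | F_t] = a_t·b_t·(1 + 2/((2+β)t − 2)). Then for every integer t ≥ s: E[a_t·b_t] ≤ E[a_t]·E[b_t], and E[a_t] = Γ(t − 1/(2+β))·Γ(s − 2/(2+β)) / (Γ(t − 2/(2+β))·Γ(s − 1/(2+β))). Moreover there exists a constant C > 0 depending only on β such that E[a_t] ≤ (t/s)^{1/(2+β)}·(1 + C/s) for all integers t ≥ s ≥ 1. -/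
open MeasureTheory

lemma aux_bound (c : ℝ) (hc : 0 < c) (hc2 : c < 1 / 2) (t : ℝ) (ht : 1 ≤ t) :
    (t - c) / (t - 2 * c) * (1 + 1 / (t + 1 - 2 * c)) ≤
      ((t + 1) / t) ^ c * (1 + 1 / (t - 2 * c)) := by
  have h1 : 0 < t - 2 * c := by linarith
  have hB : (t + 1) / (t + 1 - c) ≤ ((t + 1) / t) ^ c := by
    have h := rpow_one_add_le_one_add_mul_self (s := -(1 / (t + 1)))
      (by rw [neg_le_neg_iff, div_le_one (by linarith)]; linarith) hc.le (by linarith : c ≤ 1)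
    have e1 : 1 + -(1 / (t + 1)) = ((t + 1) / t)⁻¹ := by
      have : t + 1 ≠ 0 := by linarith
      have : t ≠ 0 := by linarith
      field_simp
      ring
    have e2 : 1 + c * -(1 / (t + 1)) = ((t + 1) / (t + 1 - c))⁻¹ := by
      have : t + 1 ≠ 0 := by linarith
      have : t + 1 - c ≠ 0 := by linarith
      field_simp
      ring
    rw [e1, e2, Real.inv_rpow (by apply div_nonneg <;> linarith)] at h
    exact (inv_le_inv₀ (by apply Real.rpow_pos_of_pos; apply div_pos <;> linarith)
      (by apply div_pos <;> linarith)).1 h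
  refine le_trans ?_ (mul_le_mul_of_nonneg_right hB (by positivity))
  obtain ⟨u, rfl⟩ : ∃ u, t = u + 2 * c := ⟨t - 2 * c, by ring⟩
  have hu : 0 < u := by linarith
  have e1 : u + 2 * c - c = u + c := by ring
  have e2 : u + 2 * c - 2 * c = u := by ring
  have e3 : u + 2 * c + 1 - 2 * c = u + 1 := by ring
  have e4 : u + 2 * c + 1 - c = u + 1 + c := by ring
  rw [e1, e2, e3, e4]
  have l : (u + c) / u * (1 + 1 / (u + 1)) = ((u + c) * (u + 2)) / (u * (u + 1)) := by
    field_simp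
    ring
  have r : (u + 2 * c + 1) / (u + 1 + c) * (1 + 1 / u) =
      ((u + 2 * c + 1) * (u + 1)) / ((u + 1 + c) * u) := by
    field_simp
  rw [l, r, div_le_div_iff₀ (by positivity) (by positivity)]
  have key : (u + c) * (u + 2) * (u + 1 + c) ≤ (u + 2 * c + 1) * (u + 1) * (u + 1) := by
    nlinarith [mul_pos hu hc, mul_pos hc hc, mul_pos hu (mul_pos hc hc),
      mul_pos hu (sub_pos.2 hc2), mul_pos hc (sub_pos.2 hc2),
      mul_pos hu (mul_pos hc (sub_pos.2 hc2))]
  nlinarith [mul_le_mul_of_nonneg_left key hu.le]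

/-- **Lemma 5.1 (abstract form).** Let `β > 0`. For adapted processes `(a_t), (b_t)` with
`a_s = b_s = 1`, `1 ≤ a_t ≤ t`, `1 ≤ b_t ≤ t` a.s., satisfying the stated conditional
expectation recurrences, we have `E[a_t b_t] ≤ E[a_t]E[b_t]`,
`E[a_t] = Γ(t−1/(2+β))Γ(s−2/(2+β))/(Γ(t−2/(2+β))Γ(s−1/(2+β)))`, and moreover there is a
constant `C > 0` depending only on `β` with `E[a_t] ≤ (t/s)^{1/(2+β)}(1+C/s)`. -/
theorem block_size_covariance (β : ℝ) (hβ : 0 < β) :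
    ∃ C : ℝ, 0 < C ∧
      ∀ (s : ℕ), 1 ≤ s →
      ∀ (Ω : Type) (m0 : MeasurableSpace Ω) (P : Measure Ω),
        IsProbabilityMeasure P →
        ∀ (ℱ : Filtration ℕ m0) (a b : ℕ → Ω → ℝ),
        Adapted ℱ a → Adapted ℱ b →
        (∀ᵐ ω ∂P, a s ω = 1) → (∀ᵐ ω ∂P, b s ω = 1) →
        (∀ t : ℕ, s ≤ t → ∀ᵐ ω ∂P,
          1 ≤ a t ω ∧ a t ω ≤ (t : ℝ) ∧ 1 ≤ b t ω ∧ b t ω ≤ (t : ℝ)) →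
        (∀ t : ℕ, s ≤ t →
          P[a (t + 1)|ℱ t] =ᵐ[P] fun ω => a t ω * (1 + 1 / ((2 + β) * (t : ℝ) - 2))) →
        (∀ t : ℕ, s ≤ t →
          P[b (t + 1)|ℱ t] =ᵐ[P] fun ω => b t ω * (1 + 1 / ((2 + β) * (t : ℝ) - 2))) →
        (∀ t : ℕ, s ≤ t →
          P[fun ω => a (t + 1) ω * b (t + 1) ω|ℱ t] =ᵐ[P]
            fun ω => a t ω * b t ω * (1 + 2 / ((2 + β) * (t : ℝ) - 2))) →
        ∀ t : ℕ, s ≤ t →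
          (∫ ω, a t ω * b t ω ∂P ≤ (∫ ω, a t ω ∂P) * ∫ ω, b t ω ∂P) ∧
          (∫ ω, a t ω ∂P =
            Real.Gamma ((t : ℝ) - 1 / (2 + β)) * Real.Gamma ((s : ℝ) - 2 / (2 + β)) /
              (Real.Gamma ((t : ℝ) - 2 / (2 + β)) * Real.Gamma ((s : ℝ) - 1 / (2 + β)))) ∧
          ∫ ω, a t ω ∂P ≤ ((t : ℝ) / (s : ℝ)) ^ (1 / (2 + β)) * (1 + C / (s : ℝ)) := by
  obtain ⟨c, hcdef⟩ : ∃ c, c = 1 / (2 + β) := ⟨_, rfl⟩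
  have hb2 : 0 < 2 + β := by linarith
  have hc : 0 < c := by rw [hcdef]; positivity
  have hc2 : c < 1 / 2 := by
    rw [hcdef]; exact one_div_lt_one_div_of_lt (by norm_num) (by linarith)
  have h2c : 2 / (2 + β) = 2 * c := by rw [hcdef]; ring
  refine ⟨1 / (1 - 2 * c), by apply one_div_pos.2; linarith, ?_⟩
  intro s hs Ω m0 P hP ℱ a b _ _ has hbs hbd ha hb hab
  have hs' : (1 : ℝ) ≤ s := by exact_mod_cast hs
  have intA : ∀ t, s ≤ t → ∫ ω, a (t + 1) ω ∂P =
      (∫ ω, a t ω ∂P) * (1 + 1 / ((2 + β) * (t : ℝ) - 2)) := fun t ht => by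
    rw [← integral_condExp (ℱ.le t), integral_congr_ae (ha t ht), integral_mul_const]
  have intB : ∀ t, s ≤ t → ∫ ω, b (t + 1) ω ∂P =
      (∫ ω, b t ω ∂P) * (1 + 1 / ((2 + β) * (t : ℝ) - 2)) := fun t ht => by
    rw [← integral_condExp (ℱ.le t), integral_congr_ae (hb t ht), integral_mul_const]
  have intAB : ∀ t, s ≤ t → ∫ ω, a (t + 1) ω * b (t + 1) ω ∂P =
      (∫ ω, a t ω * b t ω ∂P) * (1 + 2 / ((2 + β) * (t : ℝ) - 2)) := fun t ht => by
    rw [← integral_condExp (ℱ.le t), integral_congr_ae (hab t ht), integral_mul_const]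
  have nA : ∀ t, s ≤ t → 0 ≤ ∫ ω, a t ω ∂P := fun t ht =>
    integral_nonneg_of_ae (by
      filter_upwards [hbd t ht] with ω h
      exact zero_le_one.trans h.1)
  have nB : ∀ t, s ≤ t → 0 ≤ ∫ ω, b t ω ∂P := fun t ht =>
    integral_nonneg_of_ae (by
      filter_upwards [hbd t ht] with ω h
      exact zero_le_one.trans h.2.2.1)
  have iA : ∫ ω, a s ω ∂P = 1 := by
    have : a s =ᵐ[P] fun _ => (1 : ℝ) := has
    rw [integral_congr_ae this]; simp
  have iB : ∫ ω, b s ω ∂P = 1 := by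
    have : b s =ᵐ[P] fun _ => (1 : ℝ) := hbs
    rw [integral_congr_ae this]; simp
  have iAB : ∫ ω, a s ω * b s ω ∂P = 1 := by
    have : (fun ω => a s ω * b s ω) =ᵐ[P] fun _ => (1 : ℝ) := by
      filter_upwards [has, hbs] with ω h1 h2
      rw [h1, h2, one_mul]
    rw [integral_congr_ae this]; simp
  have fac : ∀ t : ℕ, s ≤ t →
      1 + 1 / ((2 + β) * (t : ℝ) - 2) = ((t : ℝ) - c) / ((t : ℝ) - 2 * c) := fun t ht => by
    have ht' : (1 : ℝ) ≤ t := by exact_mod_cast hs.trans ht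
    have h1 : (t : ℝ) - 2 * c ≠ 0 := by linarith
    have h2 : (2 + β) * (t : ℝ) - 2 = ((t : ℝ) - 2 * c) / c := by
      rw [hcdef]; field_simp
    rw [h2, one_div_div, eq_div_iff h1, add_mul, div_mul_cancel₀ _ h1]
    ring
  rw [h2c, ← hcdef]
  have main : ∀ t : ℕ, s ≤ t →
      (∫ ω, a t ω * b t ω ∂P ≤ (∫ ω, a t ω ∂P) * ∫ ω, b t ω ∂P) ∧
      (∫ ω, a t ω ∂P = Real.Gamma ((t : ℝ) - c) * Real.Gamma ((s : ℝ) - 2 * c) /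
        (Real.Gamma ((t : ℝ) - 2 * c) * Real.Gamma ((s : ℝ) - c))) ∧
      (∫ ω, a t ω ∂P) * (1 + 1 / ((t : ℝ) - 2 * c)) ≤
        ((t : ℝ) / (s : ℝ)) ^ c * (1 + 1 / ((s : ℝ) - 2 * c)) := by
    intro t ht
    have gs1 : 0 < Real.Gamma ((s : ℝ) - c) := Real.Gamma_pos_of_pos (by linarith)
    have gs2 : 0 < Real.Gamma ((s : ℝ) - 2 * c) := Real.Gamma_pos_of_pos (by linarith)
    induction t, ht using Nat.le_induction with
    | base =>
      refine ⟨by rw [iA, iB, iAB]; norm_num, ?_, ?_⟩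
      · rw [iA, mul_comm, div_self (mul_pos gs2 gs1).ne']
      · rw [iA, div_self (by linarith), Real.one_rpow]
    | succ t ht ih =>
      obtain ⟨ih1, ih2, ih3⟩ := ih
      have ht' : (1 : ℝ) ≤ t := by exact_mod_cast hs.trans ht
      have hx : 0 < (2 + β) * (t : ℝ) - 2 := by nlinarith
      refine ⟨?_, ?_, ?_⟩
      · rw [intA t ht, intB t ht, intAB t ht]
        have e : 2 / ((2 + β) * (t : ℝ) - 2) = 2 * (1 / ((2 + β) * (t : ℝ) - 2)) := by ring
        rw [e]
        have hy : 0 < 1 / ((2 + β) * (t : ℝ) - 2) := one_div_pos.2 hx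
        generalize 1 / ((2 + β) * (t : ℝ) - 2) = y at hy
        have hm := mul_nonneg (nA t ht) (nB t ht)
        have h1 := mul_le_mul_of_nonneg_right ih1 (by positivity : 0 ≤ 1 + 2 * y)
        have h2 := mul_nonneg hm (sq_nonneg y)
        nlinarith
      · rw [intA t ht, fac t ht, ih2]
        have g1 : Real.Gamma (((t + 1 : ℕ) : ℝ) - c) =
            ((t : ℝ) - c) * Real.Gamma ((t : ℝ) - c) := by
          rw [← Real.Gamma_add_one (by linarith)]; congr 1; push_cast; ring
        have g2 : Real.Gamma (((t + 1 : ℕ) : ℝ) - 2 * c) =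
            ((t : ℝ) - 2 * c) * Real.Gamma ((t : ℝ) - 2 * c) := by
          rw [← Real.Gamma_add_one (by linarith)]; congr 1; push_cast; ring
        rw [g1, g2, div_mul_div_comm]
        congr 1 <;> ring
      · have h := aux_bound c hc hc2 t ht'
        have hn : 0 ≤ 1 + 1 / ((s : ℝ) - 2 * c) := by
          have : 0 < (s : ℝ) - 2 * c := by linarith
          positivity
        rw [intA t ht, fac t ht]
        push_cast
        have e : ((t : ℝ) + 1) / s = (((t : ℝ) + 1) / t) * ((t : ℝ) / s) := by
          have : (t : ℝ) ≠ 0 := by linarith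
          field_simp
        rw [e, Real.mul_rpow (by positivity) (by positivity)]
        have hp : 0 ≤ (((t : ℝ) + 1) / t) ^ c := by positivity
        calc _ = (∫ ω, a t ω ∂P) * (((t : ℝ) - c) / ((t : ℝ) - 2 * c) *
              (1 + 1 / ((t : ℝ) + 1 - 2 * c))) := by ring
          _ ≤ (∫ ω, a t ω ∂P) * ((((t : ℝ) + 1) / t) ^ c * (1 + 1 / ((t : ℝ) - 2 * c))) :=
            mul_le_mul_of_nonneg_left h (nA t ht)
          _ = (((t : ℝ) + 1) / t) ^ c * ((∫ ω, a t ω ∂P) * (1 + 1 / ((t : ℝ) - 2 * c))) := by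
            ring
          _ ≤ _ := by
            rw [mul_assoc]
            exact mul_le_mul_of_nonneg_left ih3 hp
  intro t ht
  obtain ⟨m1, m2, m3⟩ := main t ht
  have ht' : (1 : ℝ) ≤ t := by exact_mod_cast hs.trans ht
  refine ⟨m1, m2, ?_⟩
  have h1 : 0 < (t : ℝ) - 2 * c := by linarith
  have h2 : 0 < (s : ℝ) - 2 * c := by linarith
  have h4 : 0 < 1 - 2 * c := by linarith
  have h3 : 1 / ((s : ℝ) - 2 * c) ≤ 1 / (1 - 2 * c) / s := by
    rw [div_div]
    apply one_div_le_one_div_of_le (by positivity)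
    nlinarith
  calc ∫ ω, a t ω ∂P ≤ (∫ ω, a t ω ∂P) * (1 + 1 / ((t : ℝ) - 2 * c)) :=
        le_mul_of_one_le_right (nA t ht) (by
          have := one_div_pos.2 h1
          linarith)
    _ ≤ _ := m3
    _ ≤ _ := mul_le_mul_of_nonneg_left (by linarith) (by positivity)
end

section
/- Let β > 0, let m ≥ 1 be an integer, and let (Y_i)_{i≥1} be nonnegative random variables on a common probability space such that for every integer k ≥ 1 there exists a real M_k with E[∏_{j=1}^{k} (Y_{i_j}/(m·i_j)^{1/(2+β)})²] ≤ M_k for all positive integers i_1, …, i_k. Then for every δ > 0 and every γ > 0 there exists a constant L > 0 (depending on δ, γ, β, m and the M_k but not on n) such that for all integers n ≥ 1, P(Σ_{i=1}^{n} (Y_i/(m·i)^{2/(2+β)})² ≥ n^{β/(2+β)+δ}) ≤ L/n^{γ}. -/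
open MeasureTheory

theorem aux_sum_rpow (s : ℝ) (hs : 0 < s) (hs1 : s ≤ 1) (n : ℕ) :
    ∑ i ∈ Finset.Icc 1 n, (i : ℝ) ^ (s - 1) ≤ (1 / s) * (n : ℝ) ^ s := by
  induction n with
  | zero => simp [Real.zero_rpow hs.ne']
  | succ n ih =>
    rw [Finset.sum_Icc_succ_top (by omega)]
    have hx : (0 : ℝ) < ((n + 1 : ℕ) : ℝ) := by positivity
    set x : ℝ := ((n + 1 : ℕ) : ℝ) with hxdef
    have hn : (n : ℝ) = x * (1 + -(1 / x)) := by
      rw [mul_add, mul_neg, mul_one_div_cancel hx.ne', hxdef]; push_cast; ring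
    have hx1 : (1 : ℝ) ≤ x := by rw [hxdef]; push_cast; linarith [n.cast_nonneg (α := ℝ)]
    have hle : 1 / x ≤ 1 := by rw [div_le_one hx]; exact hx1
    have hb := rpow_one_add_le_one_add_mul_self (s := -(1 / x)) (by linarith) hs.le hs1
    have h2 : (n : ℝ) ^ s ≤ x ^ s - s * x ^ (s - 1) := by
      rw [hn, Real.mul_rpow hx.le (by linarith), Real.rpow_sub_one hx.ne']
      calc _ ≤ x ^ s * (1 + s * -(1 / x)) := by gcongr
        _ = _ := by ring
    calc _ ≤ (1 / s) * (n : ℝ) ^ s + x ^ (s - 1) := by gcongr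
      _ ≤ (1 / s) * (x ^ s - s * x ^ (s - 1)) + x ^ (s - 1) := by gcongr
      _ = _ := by field_simp; ring

theorem aux_moment {Ω : Type*} [MeasurableSpace Ω] (P : Measure Ω)
    (X : ℕ → Ω → ℝ) (w : ℕ → ℝ) (hw : ∀ i, 0 ≤ w i) (k : ℕ) (M : ℝ)
    (h : ∀ i : Fin k → ℕ, (∀ j, 1 ≤ i j) → Integrable (fun ω => ∏ j, X (i j) ω) P ∧
      ∫ ω, ∏ j, X (i j) ω ∂P ≤ M) (n : ℕ) :
    Integrable (fun ω => (∑ i ∈ Finset.Icc 1 n, w i * X i ω) ^ k) P ∧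
    ∫ ω, (∑ i ∈ Finset.Icc 1 n, w i * X i ω) ^ k ∂P ≤ M * (∑ i ∈ Finset.Icc 1 n, w i) ^ k := by
  have e : ∀ g : ℕ → ℝ, (∑ i ∈ Finset.Icc 1 n, g i) ^ k =
      ∑ p ∈ Fintype.piFinset (fun _ : Fin k => Finset.Icc 1 n), ∏ j, g (p j) := by
    intro g
    rw [← Finset.prod_univ_sum]; simp
  have hp : ∀ p ∈ Fintype.piFinset (fun _ : Fin k => Finset.Icc 1 n), ∀ j, 1 ≤ p j := by
    intro p hp j
    exact (Finset.mem_Icc.1 (Fintype.mem_piFinset.1 hp j)).1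
  simp_rw [e, Finset.prod_mul_distrib]
  refine ⟨integrable_finsetSum _ fun p hpp => (h p (hp p hpp)).1.const_mul _, ?_⟩
  rw [integral_finsetSum _ fun p hpp => (h p (hp p hpp)).1.const_mul _, Finset.mul_sum]
  refine Finset.sum_le_sum fun p hpp => ?_
  rw [integral_const_mul, mul_comm]
  exact mul_le_mul_of_nonneg_right (h p (hp p hpp)).2 (Finset.prod_nonneg fun j _ => hw _)

/-- **Lemma 5.4 (abstract form).** Let `β > 0`, `m ≥ 1`, and let `(Y_i)` be nonnegative random
variables with uniformly bounded mixed moments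
`E[∏_{j=1}^{k}(Y_{i_j}/(m i_j)^{1/(2+β)})²] ≤ M_k`. Then for any `δ, γ > 0` there is `L > 0`
with `P(Σ_{i=1}^n (Y_i/(m i)^{2/(2+β)})² ≥ n^{β/(2+β)+δ}) ≤ L/n^γ` for all `n ≥ 1`. -/
theorem bad_set_probability (β : ℝ) (hβ : 0 < β) (m : ℕ) (hm : 1 ≤ m)
    (Ω : Type*) [MeasurableSpace Ω] (P : Measure Ω) [IsProbabilityMeasure P]
    (Y : ℕ → Ω → ℝ) (hmeas : ∀ i, Measurable (Y i)) (hnonneg : ∀ i ω, 0 ≤ Y i ω)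
    (hmom : ∀ k : ℕ, 1 ≤ k → ∃ M : ℝ,
      ∀ i : Fin k → ℕ, (∀ j, 1 ≤ i j) →
        Integrable (fun ω => ∏ j, (Y (i j) ω / ((m : ℝ) * (i j : ℝ)) ^ (1 / (2 + β))) ^ 2) P ∧
        ∫ ω, (∏ j, (Y (i j) ω / ((m : ℝ) * (i j : ℝ)) ^ (1 / (2 + β))) ^ 2) ∂P ≤ M) :
    ∀ δ : ℝ, 0 < δ → ∀ γ : ℝ, 0 < γ → ∃ L : ℝ, 0 < L ∧ ∀ n : ℕ, 1 ≤ n →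
      (P {ω | (n : ℝ) ^ (β / (2 + β) + δ) ≤
          ∑ i ∈ Finset.Icc 1 n, (Y i ω / ((m : ℝ) * (i : ℝ)) ^ (2 / (2 + β))) ^ 2}).toReal
        ≤ L / (n : ℝ) ^ γ := by
  intro δ hδ γ hγ
  obtain ⟨k, hk⟩ := exists_nat_ge (γ / δ)
  have hkγ : γ ≤ δ * k := by rw [div_le_iff₀ hδ] at hk; linarith
  have hk1 : 1 ≤ k := by
    rcases Nat.eq_zero_or_pos k with h | h
    · subst h; simp at hkγ; linarith
    · exact h
  obtain ⟨M, hM⟩ := hmom k hk1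
  set s : ℝ := β / (2 + β) with hs
  have hs0 : 0 < s := by positivity
  have hs1 : s ≤ 1 := by rw [hs, div_le_one (by positivity)]; linarith
  have hsa : s - 1 = - (2 / (2 + β)) := by rw [hs]; field_simp; ring
  refine ⟨(|M| + 1) * (1 / s) ^ k, by positivity, fun n hn => ?_⟩
  have hn0 : (0 : ℝ) < n := by exact_mod_cast hn
  have hn1 : (1 : ℝ) ≤ n := by exact_mod_cast hn
  obtain ⟨hI, hB⟩ := aux_moment P
    (fun i ω => (Y i ω / ((m : ℝ) * (i : ℝ)) ^ (1 / (2 + β))) ^ 2)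
    (fun i => (i : ℝ) ^ (s - 1)) (fun i => by positivity) k M hM n
  set S : Ω → ℝ := fun ω => ∑ i ∈ Finset.Icc 1 n,
    (i : ℝ) ^ (s - 1) * (Y i ω / ((m : ℝ) * (i : ℝ)) ^ (1 / (2 + β))) ^ 2 with hS
  have hS0 : ∀ ω, 0 ≤ S ω := fun ω => Finset.sum_nonneg fun i _ => by positivity
  have hle : ∀ ω, ∑ i ∈ Finset.Icc 1 n, (Y i ω / ((m : ℝ) * (i : ℝ)) ^ (2 / (2 + β))) ^ 2
      ≤ S ω := by
    intro ω
    refine Finset.sum_le_sum fun i hi => ?_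
    have hi0 : (0 : ℝ) < i := by exact_mod_cast (Finset.mem_Icc.1 hi).1
    have hm1 : (1 : ℝ) ≤ m := by exact_mod_cast hm
    have hmi : (0 : ℝ) < (m : ℝ) * i := by positivity
    have e1 : ((m : ℝ) * i) ^ (2 / (2 + β)) =
        ((m : ℝ) * i) ^ (1 / (2 + β)) * ((m : ℝ) * i) ^ (1 / (2 + β)) := by
      rw [← Real.rpow_add hmi]; congr 1; ring
    have e2 : (i : ℝ) ^ (2 / (2 + β)) ≤ ((m : ℝ) * i) ^ (2 / (2 + β)) := by
      apply Real.rpow_le_rpow hi0.le _ (by positivity)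
      nlinarith
    have e3 : (Y i ω / ((m : ℝ) * (i : ℝ)) ^ (2 / (2 + β))) ^ 2 =
        (((m : ℝ) * i) ^ (2 / (2 + β)))⁻¹ *
          (Y i ω / ((m : ℝ) * (i : ℝ)) ^ (1 / (2 + β))) ^ 2 := by
      rw [e1]
      have : ((m : ℝ) * i) ^ (1 / (2 + β)) ≠ 0 := (Real.rpow_pos_of_pos hmi _).ne'
      field_simp
    rw [e3, hsa, Real.rpow_neg hi0.le]
    have := Real.rpow_pos_of_pos hi0 (2 / (2 + β))
    gcongr
  have hsum := aux_sum_rpow s hs0 hs1 n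
  have hsum0 : 0 ≤ ∑ i ∈ Finset.Icc 1 n, (i : ℝ) ^ (s - 1) :=
    Finset.sum_nonneg fun i _ => by positivity
  have hmark := mul_meas_ge_le_integral_of_nonneg
    (Filter.Eventually.of_forall fun ω => pow_nonneg (hS0 ω) k) hI (((n : ℝ) ^ (s + δ)) ^ k)
  have hsub : P.real {ω | (n : ℝ) ^ (s + δ) ≤
      ∑ i ∈ Finset.Icc 1 n, (Y i ω / ((m : ℝ) * (i : ℝ)) ^ (2 / (2 + β))) ^ 2} ≤
      P.real {ω | ((n : ℝ) ^ (s + δ)) ^ k ≤ S ω ^ k} := by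
    refine measureReal_mono ?_ (measure_ne_top P _)
    intro ω hω
    exact pow_le_pow_left₀ (by positivity) (le_trans hω (hle ω)) k
  change P.real _ ≤ _
  refine hsub.trans ?_
  have hA : ((n : ℝ) ^ (s + δ)) ^ k = ((n : ℝ) ^ s) ^ k * (n : ℝ) ^ (δ * k) := by
    rw [Real.rpow_add hn0, mul_pow, Real.rpow_mul hn0.le, Real.rpow_natCast]
  have hB2 : ∫ ω, S ω ^ k ∂P ≤ (|M| + 1) * (1 / s) ^ k * ((n : ℝ) ^ s) ^ k := by
    calc _ ≤ M * (∑ i ∈ Finset.Icc 1 n, (i : ℝ) ^ (s - 1)) ^ k := hB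
      _ ≤ (|M| + 1) * ((1 / s) * (n : ℝ) ^ s) ^ k := by
        gcongr
        linarith [le_abs_self M]
      _ = _ := by rw [mul_pow, mul_assoc]
  have hpos : 0 < ((n : ℝ) ^ s) ^ k := by positivity
  have hγk : (n : ℝ) ^ γ ≤ (n : ℝ) ^ (δ * k) := Real.rpow_le_rpow_of_exponent_le hn1 hkγ
  rw [le_div_iff₀ (by positivity)]
  have hfin := hmark.trans hB2
  rw [hA] at hfin ⊢
  refine le_of_mul_le_mul_left ?_ hpos
  set p := P.real {ω | ((n : ℝ) ^ s) ^ k * (n : ℝ) ^ (δ * k) ≤ S ω ^ k}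
  have hp0 : 0 ≤ p := measureReal_nonneg
  calc _ ≤ ((n : ℝ) ^ s) ^ k * (p * (n : ℝ) ^ (δ * k)) := by gcongr
    _ = ((n : ℝ) ^ s) ^ k * (n : ℝ) ^ (δ * k) * p := by ring
    _ ≤ _ := hfin
    _ = _ := by ring
end
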